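/- arXiv:math/0601498 — 4 statements merged into one kernel-verified Lean document; each statement's English description precedes it below -/
import Mathlib

section
/- Let n be an odd positive integer that is not a perfect square, and z ≥ 3 real. Then Σ_{d ≤ z} μ²(2d) (8d|n) ≪ z^{1/2} n^{1/4} log(2n), where (·|·) is the Jacobi symbol and the sum is over positive integers d ≤ z. -/
lemma aux_jac_zmod (m : ℕ) (x : ℕ) :
    jacobiSym ((x : ZMod m).val : ℤ) m = jacobiSym x m := by
  rw [ZMod.val_natCast, jacobiSym.mod_left (x : ℤ) m]
  push_cast
  rfl

lemma aux_gauss_prime (p : ℕ) [Fact p.Prime] (hp : p ≠ 2) (ψ : AddChar (ZMod p) ℂ) :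
    ‖∑ a : ZMod p, ((jacobiSym (a.val : ℤ) p : ℤ) : ℂ) * ψ a‖ ≤ Real.sqrt p ∧
    (ψ = 1 → ∑ a : ZMod p, ((jacobiSym (a.val : ℤ) p : ℤ) : ℂ) * ψ a = 0) := by
  set χ : MulChar (ZMod p) ℂ := (quadraticChar (ZMod p)).ringHomComp (Int.castRingHom ℂ) with hχ
  have h1 : quadraticChar (ZMod p) ≠ 1 := quadraticChar_ne_one (by rwa [ZMod.ringChar_zmod_n])
  have hχ1 : χ ≠ 1 := by
    rw [hχ]
    exact (MulChar.ringHomComp_ne_one_iff (Int.cast_injective)).mpr h1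
  have hχ2 : χ.IsQuadratic := (quadraticChar_isQuadratic (ZMod p)).comp _
  have hs : ∑ a : ZMod p, ((jacobiSym (a.val : ℤ) p : ℤ) : ℂ) * ψ a = gaussSum χ ψ := by
    unfold gaussSum
    refine Finset.sum_congr rfl fun a _ => ?_
    congr 1
    rw [← jacobiSym.legendreSym.to_jacobiSym]
    simp [legendreSym, hχ]
  rw [hs]
  have h0 : ψ = 1 → gaussSum χ ψ = 0 := by
    rintro rfl
    exact gaussSum_one_right hχ1
  refine ⟨?_, h0⟩
  by_cases h : ψ = 1
  · rw [h0 h]; simp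
  · have := gaussSum_sq hχ1 hχ2 (AddChar.IsPrimitive.of_ne_one h)
    have hn := congrArg norm this
    rw [norm_pow, norm_mul, ZMod.card] at hn
    have h3 : ‖χ (-1)‖ ≤ 1 := by
      rcases hχ2 (-1) with h | h | h <;> rw [h] <;> simp
    apply Real.le_sqrt_of_sq_le
    rw [hn]
    simp only [Complex.norm_natCast]
    nlinarith [(Nat.cast_nonneg p : (0:ℝ) ≤ p)]

lemma aux_gauss (m : ℕ) : ∀ [NeZero m], Odd m → Squarefree m → ∀ ψ : AddChar (ZMod m) ℂ,
    ‖∑ a : ZMod m, ((jacobiSym (a.val : ℤ) m : ℤ) : ℂ) * ψ a‖ ≤ Real.sqrt m ∧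
    (1 < m → ψ = 1 → ∑ a : ZMod m, ((jacobiSym (a.val : ℤ) m : ℤ) : ℂ) * ψ a = 0) := by
  induction m using induction_on_primes with
  | zero => intro h; exact absurd rfl h.out
  | one =>
    intro _ _ _ ψ
    refine ⟨?_, by simp⟩
    simp
  | prime_mul p a hp ih =>
    intro hne hodd hsq ψ
    have : Fact p.Prime := ⟨hp⟩
    have ha0 : a ≠ 0 := by rintro rfl; exact hne.out (by simp)
    have : NeZero a := ⟨ha0⟩
    have hop := (Nat.odd_mul.mp hodd).1
    have hoa := (Nat.odd_mul.mp hodd).2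
    have hcop : Nat.Coprime p a := Nat.coprime_of_squarefree_mul hsq
    have hp2 : p ≠ 2 := by rintro rfl; exact absurd hop (by decide)
    let e := ZMod.chineseRemainder hcop
    let ψ1 : AddChar (ZMod p) ℂ :=
      { toFun := fun x => ψ (e.symm (x, 0))
        map_zero_eq_one' := by
          have : ((0 : ZMod p), (0 : ZMod a)) = 0 := rfl
          simp [this]
        map_add_eq_mul' := fun x y => by
          rw [← AddChar.map_add_eq_mul, ← map_add]; simp }
    let ψ2 : AddChar (ZMod a) ℂ :=
      { toFun := fun x => ψ (e.symm (0, x))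
        map_zero_eq_one' := by
          have : ((0 : ZMod p), (0 : ZMod a)) = 0 := rfl
          simp [this]
        map_add_eq_mul' := fun x y => by
          rw [← AddChar.map_add_eq_mul, ← map_add]; simp }
    have hfac : ∑ x : ZMod (p * a), ((jacobiSym (x.val : ℤ) (p * a) : ℤ) : ℂ) * ψ x =
        (∑ x : ZMod p, ((jacobiSym (x.val : ℤ) p : ℤ) : ℂ) * ψ1 x) *
        (∑ y : ZMod a, ((jacobiSym (y.val : ℤ) a : ℤ) : ℂ) * ψ2 y) := by
      rw [Finset.sum_mul_sum, ← Finset.sum_product', Finset.univ_product_univ]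
      refine Fintype.sum_equiv e.toEquiv _ _ fun x => ?_
      have hx : e x = ((x.val : ZMod p), (x.val : ZMod a)) := by
        conv_lhs => rw [← ZMod.natCast_zmod_val x]
        rw [map_natCast]
        rfl
      have hψ : ψ x = ψ1 (e x).1 * ψ2 (e x).2 := by
        change ψ x = ψ (e.symm ((e x).1, 0)) * ψ (e.symm (0, (e x).2))
        rw [← AddChar.map_add_eq_mul, ← map_add]
        simp
      change _ = (jacobiSym ((e x).1.val : ℤ) p : ℂ) * ψ1 (e x).1 *
        ((jacobiSym ((e x).2.val : ℤ) a : ℂ) * ψ2 (e x).2)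
      rw [hψ, jacobiSym.mul_right, hx]
      simp only [aux_jac_zmod]
      push_cast
      ring
    rw [hfac]
    obtain ⟨hp1, hp3⟩ := aux_gauss_prime p hp2 ψ1
    obtain ⟨h1, h3⟩ := ih hoa (hsq.squarefree_of_dvd (Dvd.intro_left p rfl)) ψ2
    refine ⟨?_, ?_⟩
    · rw [norm_mul]
      push_cast
      rw [Real.sqrt_mul (by positivity)]
      gcongr
    · rintro _ rfl
      rw [hp3 (by ext x; rfl), zero_mul]

lemma aux_sin (t : ℝ) (h0 : 0 < t) (h1 : t < 1) :
    1 / |Real.sin (Real.pi * t)| ≤ (1 / t + 1 / (1 - t)) / 2 := by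
  have key : 2 * (t * (1 - t)) ≤ Real.sin (Real.pi * t) := by
    have hpi := Real.pi_pos
    rcases le_total t (1/2) with h | h
    · have := Real.mul_le_sin (x := Real.pi * t) (by positivity) (by nlinarith)
      have h2 : 2 / Real.pi * (Real.pi * t) = 2 * t := by field_simp
      rw [h2] at this
      nlinarith
    · have := Real.mul_le_sin (x := Real.pi * (1 - t)) (by nlinarith) (by nlinarith)
      have h2 : 2 / Real.pi * (Real.pi * (1 - t)) = 2 * (1 - t) := by field_simp
      rw [h2, show Real.pi * (1 - t) = Real.pi - Real.pi * t by ring, Real.sin_pi_sub] at this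
      nlinarith
  have hp : 0 < t * (1 - t) := mul_pos h0 (by linarith)
  have h3 : (1 / t + 1 / (1 - t)) / 2 = 1 / (2 * (t * (1 - t))) := by
    have : 1 - t ≠ 0 := by linarith
    field_simp
    ring
  rw [h3]
  apply one_div_le_one_div_of_le (by positivity)
  exact key.trans (le_abs_self _)

lemma aux_geom (m : ℕ) [NeZero m] (k : ZMod m) (hk : k ≠ 0) (N : ℕ) :
    ‖∑ d ∈ Finset.range N, ZMod.stdAddChar (k * (d : ZMod m))‖ ≤
      m / 2 * (1 / (k.val : ℝ) + 1 / ((m : ℝ) - k.val)) := by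
  have hv0 : 0 < k.val := Nat.pos_of_ne_zero (by rwa [Ne, ZMod.val_eq_zero])
  have hvm : k.val < m := ZMod.val_lt k
  have hv0' : (0 : ℝ) < k.val := by exact_mod_cast hv0
  have hvm' : (k.val : ℝ) < m := by exact_mod_cast hvm
  have hm : (0 : ℝ) < m := by linarith
  have hpow : ∀ d : ℕ, ZMod.stdAddChar (k * (d : ZMod m)) = (ZMod.stdAddChar k : ℂ) ^ d := by
    intro d
    rw [← AddChar.map_nsmul_eq_pow, nsmul_eq_mul, mul_comm]
  simp_rw [hpow]
  have hne : (ZMod.stdAddChar k : ℂ) ≠ 1 := by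
    intro h
    apply hk
    apply ZMod.injective_stdAddChar
    rw [h, AddChar.map_zero_eq_one]
  rw [geom_sum_eq hne, norm_div]
  have hnum : ‖(ZMod.stdAddChar k : ℂ) ^ N - 1‖ ≤ 2 := by
    refine (norm_sub_le _ _).trans ?_
    rw [norm_pow, AddChar.norm_apply]
    norm_num
  have hden : ‖(ZMod.stdAddChar k : ℂ) - 1‖ = 2 * |Real.sin (Real.pi * (k.val / m))| := by
    have : (ZMod.stdAddChar k : ℂ) = Complex.exp (Complex.I * ((2 * Real.pi * (k.val / m) : ℝ) : ℂ)) := by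
      rw [ZMod.stdAddChar_apply, ZMod.toCircle_apply]
      congr 1
      push_cast
      ring
    rw [this, Complex.norm_exp_I_mul_ofReal_sub_one, Real.norm_eq_abs, abs_mul, abs_two]
    congr 3
    ring
  rw [hden]
  have hs := aux_sin (k.val / m) (by positivity) (by rwa [div_lt_one hm])
  calc _ ≤ 2 / (2 * |Real.sin (Real.pi * (k.val / m))|) := by gcongr
    _ = 1 / |Real.sin (Real.pi * (k.val / m))| := by
        rw [mul_comm, div_mul_eq_div_div_swap, div_self two_ne_zero]
    _ ≤ _ := hs
    _ = _ := by
      have : (m : ℝ) - k.val ≠ 0 := by linarith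
      field_simp

lemma aux_pv (m : ℕ) (hm1 : 1 < m) (hodd : Odd m) (hsq : Squarefree m) (N : ℕ) :
    |∑ d ∈ Finset.range N, ((jacobiSym (d : ℤ) m : ℤ) : ℝ)| ≤
      Real.sqrt m * (1 + Real.log m) := by
  have : NeZero m := ⟨by omega⟩
  have hm : (0 : ℝ) < m := by exact_mod_cast (by omega : 0 < m)
  let Φ : ZMod m → ℂ := fun a => ((jacobiSym (a.val : ℤ) m : ℤ) : ℂ)
  have hF : ∀ k, ZMod.dft Φ k = ∑ a : ZMod m, ((jacobiSym (a.val : ℤ) m : ℤ) : ℂ) *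
      (AddChar.mulShift ZMod.stdAddChar (-k)) a := by
    intro k
    rw [ZMod.dft_apply]
    refine Finset.sum_congr rfl fun a _ => ?_
    rw [AddChar.mulShift_apply, smul_eq_mul, mul_comm]
    congr 2
    ring
  have hFb : ∀ k, ‖ZMod.dft Φ k‖ ≤ Real.sqrt m := fun k => by
    rw [hF]; exact (aux_gauss m hodd hsq _).1
  have hF0 : ZMod.dft Φ 0 = 0 := by
    rw [hF]; exact (aux_gauss m hodd hsq _).2 hm1 (by simp)
  have hinv : ∀ d : ℕ, ((jacobiSym (d : ℤ) m : ℤ) : ℂ) =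
      (m : ℂ)⁻¹ * ∑ k : ZMod m, ZMod.stdAddChar (k * (d : ZMod m)) * ZMod.dft Φ k := by
    intro d
    have h1 : Φ (d : ZMod m) = ((jacobiSym (d : ℤ) m : ℤ) : ℂ) := by
      simp only [Φ, aux_jac_zmod]
    rw [← h1]
    have h2 := ZMod.invDFT_apply (ZMod.dft Φ) (d : ZMod m)
    rw [LinearEquiv.symm_apply_apply] at h2
    rw [h2]
    simp [smul_eq_mul]
  have hmain : ((∑ d ∈ Finset.range N, ((jacobiSym (d : ℤ) m : ℤ) : ℝ) : ℝ) : ℂ) =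
      (m : ℂ)⁻¹ * ∑ k : ZMod m, (∑ d ∈ Finset.range N, ZMod.stdAddChar (k * (d : ZMod m))) *
        ZMod.dft Φ k := by
    push_cast
    simp_rw [hinv]
    rw [← Finset.mul_sum, Finset.sum_comm]
    simp_rw [Finset.sum_mul]
  have hterm : ∀ k : ZMod m, ‖(∑ d ∈ Finset.range N, ZMod.stdAddChar (k * (d : ZMod m))) *
        ZMod.dft Φ k‖ ≤ m / 2 * (1 / (k.val : ℝ) + 1 / ((m : ℝ) - k.val)) * Real.sqrt m := by
    intro k
    by_cases hk : k = 0
    · subst hk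
      rw [hF0, mul_zero, norm_zero, ZMod.val_zero]
      simp only [Nat.cast_zero, sub_zero]
      positivity
    · rw [norm_mul]
      have := aux_geom m k hk N
      exact mul_le_mul this (hFb k) (norm_nonneg _) ((norm_nonneg _).trans this)
  have hsum : ∑ k : ZMod m, (1 / (k.val : ℝ) + 1 / ((m : ℝ) - k.val)) ≤ 2 * (1 + Real.log m) := by
    have h1 : ∑ k : ZMod m, (1 / (k.val : ℝ) + 1 / ((m : ℝ) - k.val)) =
        ∑ v ∈ Finset.range m, (1 / (v : ℝ) + 1 / ((m : ℝ) - v)) := by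
      refine Finset.sum_bij (fun k _ => k.val) (fun k _ => Finset.mem_range.mpr (ZMod.val_lt k))
        (fun a _ b _ h => ZMod.val_injective m h)
        (fun v hv => ⟨(v : ZMod m), Finset.mem_univ _, ZMod.val_cast_of_lt (Finset.mem_range.mp hv)⟩)
        (fun _ _ => rfl)
    rw [h1, Finset.sum_add_distrib]
    have hh : ((harmonic m : ℚ) : ℝ) = ∑ i ∈ Finset.range m, 1 / ((i : ℝ) + 1) := by
      simp [harmonic]
    have hl := harmonic_le_one_add_log m
    have h2 : ∑ v ∈ Finset.range m, 1 / (v : ℝ) ≤ (harmonic m : ℚ) := by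
      rw [hh]
      have a1 := Finset.sum_range_succ (fun v : ℕ => 1 / (v : ℝ)) m
      have a2 := Finset.sum_range_succ' (fun v : ℕ => 1 / (v : ℝ)) m
      simp only [Nat.cast_add, Nat.cast_one, Nat.cast_zero, div_zero, add_zero] at a2
      have : 0 ≤ 1 / (m : ℝ) := by positivity
      linarith
    have h3 : ∑ v ∈ Finset.range m, 1 / ((m : ℝ) - v) = (harmonic m : ℚ) := by
      rw [hh, ← Finset.sum_range_reflect]
      refine Finset.sum_congr rfl fun i hi => ?_
      have := Finset.mem_range.mp hi
      rw [show m - 1 - i = m - (i + 1) by omega, Nat.cast_sub (by omega)]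
      push_cast
      ring_nf
    linarith
  have hn : |∑ d ∈ Finset.range N, ((jacobiSym (d : ℤ) m : ℤ) : ℝ)| =
      ‖((∑ d ∈ Finset.range N, ((jacobiSym (d : ℤ) m : ℤ) : ℝ) : ℝ) : ℂ)‖ := by
    rw [Complex.norm_real, Real.norm_eq_abs]
  rw [hn, hmain, norm_mul, norm_inv, Complex.norm_natCast]
  calc _ ≤ (m : ℝ)⁻¹ * ∑ k : ZMod m, m / 2 * (1 / (k.val : ℝ) + 1 / ((m : ℝ) - k.val)) * Real.sqrt m := by
        gcongr
        exact (norm_sum_le _ _).trans (Finset.sum_le_sum fun k _ => hterm k)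
    _ = Real.sqrt m / 2 * ∑ k : ZMod m, (1 / (k.val : ℝ) + 1 / ((m : ℝ) - k.val)) := by
        rw [← Finset.sum_mul, ← Finset.mul_sum]
        field_simp
    _ ≤ Real.sqrt m / 2 * (2 * (1 + Real.log m)) := by gcongr
    _ = _ := by ring

lemma aux_reindex (f : ℕ → ℝ) (N r : ℕ) (hr : 0 < r) :
    ∑ d ∈ Finset.Icc 1 N, (if r ∣ d then f d else 0) =
      ∑ e ∈ Finset.Icc 1 (N / r), f (r * e) := by
  rw [← Finset.sum_filter]
  symm
  refine Finset.sum_bij (fun e _ => r * e) ?_ ?_ ?_ ?_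
  · intro e he
    rw [Finset.mem_Icc] at he
    rw [Finset.mem_filter, Finset.mem_Icc]
    refine ⟨⟨Nat.mul_pos hr he.1, ?_⟩, Dvd.intro _ rfl⟩
    rw [mul_comm]
    exact (Nat.le_div_iff_mul_le hr).mp he.2
  · intro a _ b _ h
    exact Nat.eq_of_mul_eq_mul_left hr h
  · intro d hd
    rw [Finset.mem_filter, Finset.mem_Icc] at hd
    obtain ⟨⟨h1, h2⟩, e, rfl⟩ := hd
    refine ⟨e, ?_, rfl⟩
    rw [Finset.mem_Icc, Nat.le_div_iff_mul_le hr, mul_comm]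
    exact ⟨Nat.pos_of_mul_pos_left h1, h2⟩
  · intros; rfl

lemma aux_moebius_sum (g : ℕ) (hg : g ≠ 0) :
    ∑ r ∈ g.divisors, ((ArithmeticFunction.moebius r : ℤ) : ℝ) = if g = 1 then 1 else 0 := by
  have h := congrArg (fun F : ArithmeticFunction ℤ => F g) ArithmeticFunction.coe_zeta_mul_moebius
  simp only [ArithmeticFunction.coe_zeta_mul_apply, ArithmeticFunction.one_apply] at h
  rw [← Int.cast_sum, h]
  split_ifs <;> simp

lemma aux_moebius_abs (r : ℕ) : |((ArithmeticFunction.moebius r : ℤ) : ℝ)| ≤ 1 := by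
  have := ArithmeticFunction.abs_moebius_le_one (n := r)
  exact_mod_cast this

lemma aux_jac_abs (a : ℤ) (n : ℕ) : |((jacobiSym a n : ℤ) : ℝ)| ≤ 1 := by
  rcases jacobiSym.trichotomy a n with h | h | h <;> rw [h] <;> simp

lemma aux_pv_Icc (m : ℕ) (hm1 : 1 < m) (hodd : Odd m) (hsq : Squarefree m) (N : ℕ) :
    |∑ d ∈ Finset.Icc 1 N, ((jacobiSym (d : ℤ) m : ℤ) : ℝ)| ≤
      Real.sqrt m * (1 + Real.log m) := by
  have h := aux_pv m hm1 hodd hsq (N + 1)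
  have h2 : ∑ d ∈ Finset.range (N + 1), ((jacobiSym (d : ℤ) m : ℤ) : ℝ) =
      ∑ d ∈ Finset.Icc 1 N, ((jacobiSym (d : ℤ) m : ℤ) : ℝ) := by
    rw [Finset.range_eq_Ico, Finset.sum_eq_sum_Ico_succ_bot (by omega)]
    simp only [Nat.cast_zero, jacobiSym.zero_left hm1, Int.cast_zero, zero_add]
    rfl
  rwa [h2] at h

lemma aux_pv_odd (n : ℕ) (hn : 0 < n) (hodd : Odd n) (hns : ¬ IsSquare n) (N : ℕ) :
    |∑ d ∈ Finset.Icc 1 N, (if Odd d then ((jacobiSym (d : ℤ) n : ℤ) : ℝ) else 0)| ≤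
      2 * (Real.sqrt n * (1 + Real.log n)) := by
  obtain ⟨a, b, ha, hb, hab, hsq⟩ := Nat.sq_mul_squarefree_of_pos hn
  have ha1 : 1 < a := by
    rcases Nat.lt_or_ge 1 a with h | h
    · exact h
    · have : a = 1 := by omega
      subst this
      exact absurd ⟨b, by rw [← hab]; ring⟩ hns
  have hao : Odd a := by
    rw [← hab] at hodd
    exact (Nat.odd_mul.mp hodd).2
  have : NeZero a := ⟨by omega⟩
  have : NeZero b := ⟨by omega⟩
  have h2b : 2 * b ≠ 0 := by omega
  have hpt : ∀ d ∈ Finset.Icc 1 N, (if Odd d then ((jacobiSym (d : ℤ) n : ℤ) : ℝ) else 0) =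
      ∑ r ∈ (2 * b).divisors, if r ∣ d then ((ArithmeticFunction.moebius r : ℤ) : ℝ) *
        ((jacobiSym (d : ℤ) a : ℤ) : ℝ) else 0 := by
    intro d hd
    have hd0 : d ≠ 0 := by have := (Finset.mem_Icc.mp hd).1; omega
    rw [← Finset.sum_filter, ← Finset.sum_mul]
    have hfil : (2 * b).divisors.filter (fun r => r ∣ d) = (Nat.gcd d (2 * b)).divisors := by
      ext r
      simp only [Finset.mem_filter, Nat.mem_divisors, Nat.dvd_gcd_iff, Ne, Nat.gcd_eq_zero_iff]
      tauto
    rw [hfil, aux_moebius_sum _ (by simp [hd0])]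
    have hj : jacobiSym (d : ℤ) n = jacobiSym (d : ℤ) b ^ 2 * jacobiSym (d : ℤ) a := by
      rw [← hab, jacobiSym.mul_right, jacobiSym.pow_right]
    have hiff : Nat.gcd d (2 * b) = 1 ↔ Odd d ∧ Nat.gcd d b = 1 := by
      change Nat.Coprime d (2 * b) ↔ _ ∧ Nat.Coprime d b
      rw [Nat.coprime_mul_iff_right, Nat.coprime_two_right]
    by_cases ho : Odd d
    · by_cases hg : Nat.gcd d b = 1
      · rw [if_pos ho, if_pos (hiff.mpr ⟨ho, hg⟩), hj, jacobiSym.sq_one (by simpa using hg)]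
        simp
      · rw [if_pos ho, if_neg (fun h => hg (hiff.mp h).2), hj,
          jacobiSym.eq_zero_iff_not_coprime.mpr (by simpa using hg)]
        simp
    · rw [if_neg ho, if_neg (fun h => ho (hiff.mp h).1)]
      simp
  rw [Finset.sum_congr rfl hpt, Finset.sum_comm]
  have han : a ≤ n := by rw [← hab]; exact Nat.le_mul_of_pos_left _ (by positivity)
  have hlog : Real.log a ≤ Real.log n :=
    Real.log_le_log (by exact_mod_cast ha) (by exact_mod_cast han)
  have hsqrt : Real.sqrt n = b * Real.sqrt a := by
    rw [← hab]
    push_cast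
    rw [Real.sqrt_mul (by positivity), Real.sqrt_sq (by positivity)]
  have hloga : 0 ≤ Real.log a := Real.log_natCast_nonneg a
  have hin : ∀ r ∈ (2 * b).divisors, |∑ d ∈ Finset.Icc 1 N, (if r ∣ d then
      ((ArithmeticFunction.moebius r : ℤ) : ℝ) * ((jacobiSym (d : ℤ) a : ℤ) : ℝ) else 0)| ≤
      Real.sqrt a * (1 + Real.log a) := by
    intro r hr
    rw [aux_reindex (fun d => ((ArithmeticFunction.moebius r : ℤ) : ℝ) *
      ((jacobiSym (d : ℤ) a : ℤ) : ℝ)) N r (Nat.pos_of_mem_divisors hr)]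
    have : ∀ e : ℕ, ((ArithmeticFunction.moebius r : ℤ) : ℝ) *
        ((jacobiSym ((r * e : ℕ) : ℤ) a : ℤ) : ℝ) =
        (((ArithmeticFunction.moebius r : ℤ) : ℝ) * ((jacobiSym (r : ℤ) a : ℤ) : ℝ)) *
          ((jacobiSym (e : ℤ) a : ℤ) : ℝ) := by
      intro e
      rw [Nat.cast_mul, jacobiSym.mul_left]
      push_cast
      ring
    simp_rw [this]
    rw [← Finset.mul_sum, abs_mul, abs_mul]
    have h1 := aux_pv_Icc a ha1 hao hsq (N / r)
    have h2 : |((ArithmeticFunction.moebius r : ℤ) : ℝ)| * |((jacobiSym (r : ℤ) a : ℤ) : ℝ)| ≤ 1 :=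
      mul_le_one₀ (aux_moebius_abs r) (abs_nonneg _) (aux_jac_abs _ _)
    exact (mul_le_of_le_one_left (abs_nonneg _) h2).trans h1
  calc _ ≤ ∑ r ∈ (2 * b).divisors, Real.sqrt a * (1 + Real.log a) :=
        (Finset.abs_sum_le_sum_abs _ _).trans (Finset.sum_le_sum hin)
    _ = ((2 * b).divisors.card : ℝ) * (Real.sqrt a * (1 + Real.log a)) := by
        rw [Finset.sum_const, nsmul_eq_mul]
    _ ≤ (2 * b : ℝ) * (Real.sqrt a * (1 + Real.log a)) := by
        gcongr
        exact_mod_cast Nat.card_divisors_le_self (2 * b)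
    _ ≤ (2 * b : ℝ) * (Real.sqrt a * (1 + Real.log n)) := by gcongr
    _ = _ := by rw [hsqrt]; ring

lemma aux_sq_dvd (α a b : ℕ) (hb : 0 < b) (hsq : Squarefree a) : α ^ 2 ∣ b ^ 2 * a ↔ α ∣ b := by
  constructor
  · intro h
    obtain ⟨g, α', b', hg, hco, h1, h2⟩ := Nat.exists_coprime' (m := α) (n := b)
      (Nat.gcd_pos_of_pos_right _ hb)
    subst h1 h2
    have h3 : α' ^ 2 ∣ b' ^ 2 * a := by
      have : g ^ 2 * α' ^ 2 ∣ g ^ 2 * (b' ^ 2 * a) := by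
        convert h using 1 <;> ring
      exact Nat.dvd_of_mul_dvd_mul_left (by positivity) this
    have h4 : α' ^ 2 ∣ a := (Nat.Coprime.pow 2 2 hco).dvd_of_dvd_mul_left h3
    have h5 := hsq α' (by rwa [← pow_two])
    rw [Nat.isUnit_iff] at h5
    rw [h5, one_mul]
    exact Dvd.intro_left _ rfl
  · intro h
    exact Dvd.dvd.mul_right (pow_dvd_pow_of_dvd h 2) a

lemma aux_sqfree_sum (N d : ℕ) (hd : d ∈ Finset.Icc 1 N) :
    ∑ α ∈ Finset.Icc 1 N, (if α ^ 2 ∣ d then ((ArithmeticFunction.moebius α : ℤ) : ℝ) else 0) =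
      if Squarefree d then 1 else 0 := by
  rw [Finset.mem_Icc] at hd
  obtain ⟨a, b, ha, hb, hab, hsq⟩ := Nat.sq_mul_squarefree_of_pos hd.1
  rw [← Finset.sum_filter]
  have hfil : (Finset.Icc 1 N).filter (fun α => α ^ 2 ∣ d) = b.divisors := by
    ext α
    rw [Finset.mem_filter, ← hab, aux_sq_dvd α a b hb hsq, Nat.mem_divisors, Finset.mem_Icc]
    constructor
    · intro h; exact ⟨h.2, by omega⟩
    · intro h
      have h1 := Nat.le_of_dvd hb h.1
      have h2 : b ≤ d := by rw [← hab]; nlinarith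
      exact ⟨⟨Nat.pos_of_dvd_of_pos h.1 hb, by omega⟩, h.1⟩
  rw [hfil, aux_moebius_sum b (by omega)]
  congr 1
  rw [eq_iff_iff]
  constructor
  · rintro rfl
    rw [← hab]; simpa using hsq
  · intro h
    exact Nat.isUnit_iff.mp (h b (by rw [← hab, pow_two]; exact Dvd.intro _ rfl))

lemma aux_swap (n N : ℕ) :
    |∑ d ∈ Finset.Icc 1 N,
          if Squarefree (2 * d) then ((jacobiSym (8 * d) n : ℤ) : ℝ) else 0| ≤
    ∑ α ∈ Finset.Icc 1 N, |∑ e ∈ Finset.Icc 1 (N / α ^ 2),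
      (if Odd e then ((jacobiSym (e : ℤ) n : ℤ) : ℝ) else 0)| := by
  have hpt : ∀ d ∈ Finset.Icc 1 N,
      (if Squarefree (2 * d) then ((jacobiSym (8 * d) n : ℤ) : ℝ) else 0) =
      ((jacobiSym 8 n : ℤ) : ℝ) * ∑ α ∈ Finset.Icc 1 N, if α ^ 2 ∣ d then
        ((ArithmeticFunction.moebius α : ℤ) : ℝ) *
        (if Odd d then ((jacobiSym (d : ℤ) n : ℤ) : ℝ) else 0) else 0 := by
    intro d hd
    have h := aux_sqfree_sum N d hd
    have h' : ∑ α ∈ Finset.Icc 1 N, (if α ^ 2 ∣ d then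
        ((ArithmeticFunction.moebius α : ℤ) : ℝ) *
        (if Odd d then ((jacobiSym (d : ℤ) n : ℤ) : ℝ) else 0) else 0) =
        (if Squarefree d then 1 else 0) *
          (if Odd d then ((jacobiSym (d : ℤ) n : ℤ) : ℝ) else 0) := by
      rw [← h, Finset.sum_mul]
      refine Finset.sum_congr rfl fun α _ => ?_
      split_ifs <;> simp
    rw [h']
    have hiff : Squarefree (2 * d) ↔ Odd d ∧ Squarefree d := by
      rw [Nat.squarefree_mul_iff, Nat.coprime_two_left]
      have := Nat.squarefree_two
      tauto
    rw [jacobiSym.mul_left]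
    by_cases h1 : Odd d <;> by_cases h2 : Squarefree d <;> simp [hiff, h1, h2]
  rw [Finset.sum_congr rfl hpt, ← Finset.mul_sum, Finset.sum_comm, abs_mul]
  refine (mul_le_of_le_one_left (abs_nonneg _) (aux_jac_abs _ _)).trans ?_
  refine (Finset.abs_sum_le_sum_abs _ _).trans (Finset.sum_le_sum fun α hα => ?_)
  have hα1 := (Finset.mem_Icc.mp hα).1
  rw [aux_reindex (fun d => ((ArithmeticFunction.moebius α : ℤ) : ℝ) *
        (if Odd d then ((jacobiSym (d : ℤ) n : ℤ) : ℝ) else 0)) N (α ^ 2) (by positivity)]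
  have : ∀ e : ℕ, ((ArithmeticFunction.moebius α : ℤ) : ℝ) *
        (if Odd (α ^ 2 * e) then ((jacobiSym ((α ^ 2 * e : ℕ) : ℤ) n : ℤ) : ℝ) else 0) =
      (((ArithmeticFunction.moebius α : ℤ) : ℝ) *
        (if Odd (α ^ 2) then ((jacobiSym ((α ^ 2 : ℕ) : ℤ) n : ℤ) : ℝ) else 0)) *
      (if Odd e then ((jacobiSym (e : ℤ) n : ℤ) : ℝ) else 0) := by
    intro e
    rw [Nat.cast_mul, jacobiSym.mul_left]
    by_cases h1 : Odd (α ^ 2) <;> by_cases h2 : Odd e <;>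
      simp only [Nat.odd_mul, h1, h2, and_self, and_true, and_false, if_true, if_false,
        mul_zero, zero_mul]
    push_cast
    ring
  simp_rw [this]
  rw [← Finset.mul_sum, abs_mul, abs_mul]
  refine mul_le_of_le_one_left (abs_nonneg _) ?_
  refine mul_le_one₀ (aux_moebius_abs α) (abs_nonneg _) ?_
  split_ifs
  · exact aux_jac_abs _ _
  · simp

lemma aux_triv (n M : ℕ) : |∑ e ∈ Finset.Icc 1 M,
      (if Odd e then ((jacobiSym (e : ℤ) n : ℤ) : ℝ) else 0)| ≤ M := by
  refine (Finset.abs_sum_le_sum_abs _ _).trans ?_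
  calc _ ≤ ∑ e ∈ Finset.Icc 1 M, (1 : ℝ) := by
        refine Finset.sum_le_sum fun e _ => ?_
        split_ifs
        · exact aux_jac_abs _ _
        · simp
    _ = M := by simp

theorem quadratic_character_sum_nonsquare_bound :
    ∃ C : ℝ, 0 < C ∧ ∀ (n : ℕ) (z : ℝ), 0 < n → Odd n → ¬ IsSquare n → 3 ≤ z →
      |∑ d ∈ Finset.Icc 1 ⌊z⌋₊,
          if Squarefree (2 * d) then ((jacobiSym (8 * d) n : ℤ) : ℝ) else 0| ≤
        C * z ^ ((1 : ℝ) / 2) * (n : ℝ) ^ ((1 : ℝ) / 4) * Real.log (2 * n) := by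
  refine ⟨6, by norm_num, fun n z hn hodd hns hz => ?_⟩
  have hn3 : 3 ≤ n := by
    by_contra h
    interval_cases n
    · exact hns ⟨1, rfl⟩
    · exact absurd hodd (by decide)
  have hn3' : (3 : ℝ) ≤ n := by exact_mod_cast hn3
  set N := ⌊z⌋₊ with hN
  have hNz : (N : ℝ) ≤ z := Nat.floor_le (by linarith)
  set Z := z ^ ((1 : ℝ) / 2) with hZ
  set Q := (n : ℝ) ^ ((1 : ℝ) / 4) with hQ
  have hZ0 : 0 < Z := Real.rpow_pos_of_pos (by linarith) _
  have hQ0 : 0 < Q := Real.rpow_pos_of_pos (by linarith) _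
  have hZZ : Z * Z = z := by
    rw [hZ, ← Real.rpow_add (by linarith)]; norm_num
  have hQQ : Q * Q = Real.sqrt n := by
    rw [hQ, ← Real.rpow_add (by linarith), Real.sqrt_eq_rpow]; norm_num
  set L := Real.log (2 * n) with hL
  have hL1 : 1 ≤ L := by
    rw [hL, Real.le_log_iff_exp_le (by linarith)]
    have := Real.exp_one_lt_d9
    linarith
  have hlog : Real.log n ≤ L := Real.log_le_log (by linarith) (by linarith)
  set A := Z / Q with hA
  have hA0 : 0 < A := div_pos hZ0 hQ0
  refine (aux_swap n N).trans ?_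
  set T : ℕ → ℝ := fun α => |∑ e ∈ Finset.Icc 1 (N / α ^ 2),
      (if Odd e then ((jacobiSym (e : ℤ) n : ℤ) : ℝ) else 0)| with hT
  have hT1 : ∀ α, T α ≤ 4 * (Q * Q * L) := by
    intro α
    refine (aux_pv_odd n hn hodd hns (N / α ^ 2)).trans ?_
    rw [← hQQ]
    nlinarith [mul_pos hQ0 hQ0]
  have hT2 : ∀ α, T α ≤ z * ((α : ℝ) ^ 2)⁻¹ := by
    intro α
    refine (aux_triv n (N / α ^ 2)).trans ?_
    refine Nat.cast_div_le.trans ?_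
    push_cast
    rw [div_eq_mul_inv]
    gcongr
  have hsplit : ∑ α ∈ Finset.Icc 1 N, T α ≤
      ∑ α ∈ Finset.Icc 1 ⌊A⌋₊, T α + ∑ α ∈ Finset.Ioo ⌊A⌋₊ (N + 1), T α := by
    have hsub : Finset.Icc 1 N ⊆ Finset.Icc 1 ⌊A⌋₊ ∪ Finset.Ioo ⌊A⌋₊ (N + 1) := by
      intro x hx
      simp only [Finset.mem_union, Finset.mem_Icc, Finset.mem_Ioo] at hx ⊢
      omega
    refine (Finset.sum_le_sum_of_subset_of_nonneg hsub (fun _ _ _ => abs_nonneg _)).trans ?_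
    rw [← Finset.sum_union_inter]
    exact le_add_of_nonneg_right (Finset.sum_nonneg fun _ _ => abs_nonneg _)
  have hB1 : ∑ α ∈ Finset.Icc 1 ⌊A⌋₊, T α ≤ A * (4 * (Q * Q * L)) := by
    calc _ ≤ ∑ α ∈ Finset.Icc 1 ⌊A⌋₊, 4 * (Q * Q * L) := Finset.sum_le_sum fun α _ => hT1 α
      _ = (⌊A⌋₊ : ℝ) * (4 * (Q * Q * L)) := by simp
      _ ≤ _ := by
        gcongr
        exact Nat.floor_le hA0.le
  have hB2 : ∑ α ∈ Finset.Ioo ⌊A⌋₊ (N + 1), T α ≤ z * (2 / A) := by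
    calc _ ≤ ∑ α ∈ Finset.Ioo ⌊A⌋₊ (N + 1), z * ((α : ℝ) ^ 2)⁻¹ := Finset.sum_le_sum fun α _ => hT2 α
      _ = z * ∑ α ∈ Finset.Ioo ⌊A⌋₊ (N + 1), ((α : ℝ) ^ 2)⁻¹ := by rw [Finset.mul_sum]
      _ ≤ z * (2 / ((⌊A⌋₊ : ℝ) + 1)) := by
        gcongr
        exact sum_Ioo_inv_sq_le _ _
      _ ≤ _ := by
        gcongr
        exact (Nat.lt_floor_add_one A).le
  have e1 : A * (4 * (Q * Q * L)) = 4 * (Z * Q * L) := by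
    rw [hA]; field_simp
  have e2 : z * (2 / A) = 2 * (Z * Q) := by
    rw [hA, ← hZZ]; field_simp
  have e3 : Z * Q ≤ Z * Q * L := le_mul_of_one_le_right (by positivity) hL1
  calc _ ≤ _ := hsplit
    _ ≤ 4 * (Z * Q * L) + 2 * (Z * Q) := by rw [← e1, ← e2]; exact add_le_add hB1 hB2
    _ ≤ 6 * Z * Q * L := by linarith
end

section
/- Let n be an odd positive integer that is a perfect square, and z ≥ 3. Then Σ_{d ≤ z} μ²(2d) (8d|n) = (z/ζ(2)) Π_{p | 2n} p/(p+1) + O_ε(z^{1/2+ε} n^{ε}), since (8d|n) = 1 when gcd(d, n) = 1 and 0 otherwise for squarefree odd d. -/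
namespace QCS
open ArithmeticFunction Finset

/-- number of `b ≤ m` divisible by no element of `S` -/
noncomputable def A (S : Finset ℕ) (m : ℕ) : ℕ :=
  ((Finset.Icc 1 m).filter (fun b => ∀ p ∈ S, ¬ p ∣ b)).card

/-- coprime-restricted Moebius function -/
noncomputable def g (N a : ℕ) : ℝ := if Nat.Coprime a N then ((moebius a : ℤ) : ℝ) else 0

lemma card_mul (k m : ℕ) (hk : 0 < k) (P : ℕ → Prop) [DecidablePred P] :
    ((Finset.Icc 1 m).filter (fun b => k ∣ b ∧ P b)).card =
      ((Finset.Icc 1 (m / k)).filter (fun b => P (k * b))).card := by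
  symm
  apply Finset.card_bij (fun b _ => k * b)
  · intro b hb
    simp only [Finset.mem_filter, Finset.mem_Icc] at hb ⊢
    refine ⟨⟨Nat.mul_pos hk hb.1.1, ?_⟩, Dvd.intro _ rfl, hb.2⟩
    have := (Nat.le_div_iff_mul_le hk).1 hb.1.2
    linarith [mul_comm b k]
  · intro a _ b _ h
    exact Nat.eq_of_mul_eq_mul_left hk h
  · intro b hb
    simp only [Finset.mem_filter, Finset.mem_Icc] at hb
    obtain ⟨⟨h1, h2⟩, ⟨c, rfl⟩, h3⟩ := hb
    refine ⟨c, ?_, rfl⟩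
    simp only [Finset.mem_filter, Finset.mem_Icc]
    refine ⟨⟨Nat.pos_of_mul_pos_left h1, (Nat.le_div_iff_mul_le hk).2 (by linarith [mul_comm c k])⟩, h3⟩

lemma A_insert (S : Finset ℕ) (hS : ∀ p ∈ S, p.Prime) (q : ℕ) (hq : q.Prime) (hqS : q ∉ S) (m : ℕ) :
    A (insert q S) m + A S (m / q) = A S m := by
  have h1 : A S (m / q) =
      ((Finset.Icc 1 m).filter (fun b => q ∣ b ∧ ∀ p ∈ S, ¬ p ∣ b)).card := by
    rw [card_mul q m hq.pos, A]
    congr 1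
    apply Finset.filter_congr
    intro b _
    apply forall₂_congr
    intro p hp
    rw [(hS p hp).dvd_mul, (Nat.prime_dvd_prime_iff_eq (hS p hp) hq)]
    have : p ≠ q := fun h => hqS (h ▸ hp)
    tauto
  rw [h1, A, A, ← Finset.card_union_of_disjoint]
  · congr 1
    ext b
    simp only [Finset.mem_union, Finset.mem_filter, Finset.forall_mem_insert]
    tauto
  · rw [Finset.disjoint_left]
    intro b
    simp only [Finset.mem_filter, Finset.forall_mem_insert]
    tauto

lemma A_bound (S : Finset ℕ) : (∀ p ∈ S, p.Prime) → ∀ x : ℝ, 0 ≤ x →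
    |(A S ⌊x⌋₊ : ℝ) - x * ∏ p ∈ S, (1 - 1 / (p : ℝ))| ≤ 2 ^ S.card := by
  induction S using Finset.induction_on with
  | empty =>
    intro _ x hx
    have h1 := Nat.floor_le hx
    have h2 := Nat.lt_floor_add_one x
    simp [A]
    rw [abs_le]; constructor <;> linarith
  | insert q S hqS ih =>
    intro hS x hx
    have hS' : ∀ p ∈ S, p.Prime := fun p hp => hS p (Finset.mem_insert_of_mem hp)
    have hq : q.Prime := hS q (Finset.mem_insert_self _ _)
    have h := A_insert S hS' q hq hqS ⌊x⌋₊
    rw [← Nat.floor_div_natCast] at h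
    have h' : (A (insert q S) ⌊x⌋₊ : ℝ) = A S ⌊x⌋₊ - A S ⌊x / q⌋₊ := by
      rw [← h]; push_cast; ring
    have i1 := ih hS' x hx
    have i2 := ih hS' (x / q) (by positivity)
    rw [Finset.prod_insert hqS, Finset.card_insert_of_notMem hqS, h', pow_succ]
    set T := ∏ p ∈ S, (1 - 1 / (p : ℝ))
    have e : (A S ⌊x⌋₊ : ℝ) - A S ⌊x / q⌋₊ - x * ((1 - 1 / (q : ℝ)) * T) =
      ((A S ⌊x⌋₊ : ℝ) - x * T) - (A S ⌊x / q⌋₊ - x / q * T) := by ring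
    rw [e]
    refine (abs_sub _ _).trans ?_
    linarith

lemma sum_moebius_divisors (c : ℕ) (hc : c ≠ 0) :
    ∑ a ∈ c.divisors, moebius a = if c = 1 then 1 else 0 := by
  rw [← coe_zeta_mul_apply, coe_zeta_mul_moebius, one_apply]

lemma sq_dvd_iff {a c s : ℕ} (hc : c ≠ 0) (hs : Squarefree s) : a ^ 2 ∣ c ^ 2 * s ↔ a ∣ c := by
  constructor
  · intro h
    have hs0 : s ≠ 0 := hs.ne_zero
    have ha0 : a ≠ 0 := by
      rintro rfl
      simp at h
      tauto
    rw [← Nat.factorization_le_iff_dvd ha0 hc]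
    intro p
    have h2 := (Nat.factorization_le_iff_dvd (by positivity) (by positivity)).2 h p
    rw [Nat.factorization_mul (by positivity) hs0, Nat.factorization_pow, Nat.factorization_pow] at h2
    simp at h2
    have := hs.natFactorization_le_one p
    omega
  · intro h
    exact Dvd.dvd.mul_right (pow_dvd_pow_of_dvd h 2) s

lemma squarefree_indicator (d R : ℕ) (hd : d ≠ 0) (hR : ∀ a, a ^ 2 ∣ d → a ≤ R) :
    (∑ a ∈ (Finset.Icc 1 R).filter (fun a => a ^ 2 ∣ d), moebius a) =
      if Squarefree d then 1 else 0 := by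
  obtain ⟨s, c, rfl, hs⟩ := Nat.sq_mul_squarefree d
  have hc : c ≠ 0 := by rintro rfl; simp at hd
  have : (Finset.Icc 1 R).filter (fun a => a ^ 2 ∣ c ^ 2 * s) = c.divisors := by
    ext a
    simp only [Finset.mem_filter, Finset.mem_Icc, Nat.mem_divisors, sq_dvd_iff hc hs]
    constructor
    · tauto
    · rintro ⟨h, -⟩
      exact ⟨⟨Nat.pos_of_dvd_of_pos h (Nat.pos_of_ne_zero hc), hR a ((sq_dvd_iff hc hs).2 h)⟩, h⟩
  rw [this, sum_moebius_divisors c hc]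
  congr 1
  apply propext
  constructor
  · rintro rfl; simpa using hs
  · intro h
    have := h c (by rw [pow_two, mul_assoc]; rw [← mul_assoc]; exact Dvd.intro _ rfl)
    exact Nat.isUnit_iff.1 this

lemma A_coprime (N m : ℕ) (hN : N ≠ 0) :
    A N.primeFactors m = ((Finset.Icc 1 m).filter (fun b => Nat.Coprime b N)).card := by
  rw [A]
  congr 1
  apply Finset.filter_congr
  intro b _
  constructor
  · intro h
    apply Nat.Coprime.symm
    apply Nat.coprime_of_dvd
    intro p hp h1 h2
    exact h p (Nat.mem_primeFactors.2 ⟨hp, h1, hN⟩) h2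
  · intro h p hp h2
    have hp' := Nat.mem_primeFactors.1 hp
    have := Nat.dvd_gcd h2 hp'.2.1
    rw [h] at this
    exact hp'.1.one_lt.ne' (Nat.dvd_one.1 this)

lemma count_eq (N Z : ℕ) (hN : N ≠ 0) :
    (∑ d ∈ Finset.Icc 1 Z, if Squarefree d ∧ Nat.Coprime d N then (1 : ℝ) else 0) =
      ∑ a ∈ Finset.Icc 1 (Nat.sqrt Z), g N a * A N.primeFactors (Z / a ^ 2) := by
  have h1 : ∀ d ∈ Finset.Icc 1 Z, (if Squarefree d ∧ Nat.Coprime d N then (1 : ℝ) else 0) =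
      ∑ a ∈ Finset.Icc 1 (Nat.sqrt Z), if a ^ 2 ∣ d ∧ Nat.Coprime d N then ((moebius a : ℤ) : ℝ) else 0 := by
    intro d hd
    rw [Finset.mem_Icc] at hd
    by_cases hc : Nat.Coprime d N
    · have := squarefree_indicator d (Nat.sqrt Z) (by omega) (by
        intro a ha
        rw [Nat.le_sqrt']
        exact (Nat.le_of_dvd (by omega) ha).trans hd.2)
      have hh : ∀ Q : Prop, (Q ∧ Nat.Coprime d N) ↔ Q := fun Q => and_iff_left hc
      simp only [hh]
      rw [← Finset.sum_filter, ← Int.cast_sum, this]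
      split_ifs <;> simp
    · have hh : ∀ Q : Prop, (Q ∧ Nat.Coprime d N) ↔ False := fun Q => by tauto
      simp [hh]
  rw [Finset.sum_congr rfl h1, Finset.sum_comm]
  apply Finset.sum_congr rfl
  intro a ha
  rw [Finset.mem_Icc] at ha
  rw [← Finset.sum_filter, Finset.sum_const, card_mul (a ^ 2) Z (by have := ha.1; positivity), nsmul_eq_mul, mul_comm, g,
    A_coprime N _ hN]
  by_cases hc : Nat.Coprime a N
  · rw [if_pos hc]
    congr 3
    apply Finset.filter_congr
    intro b _
    rw [Nat.coprime_mul_iff_left]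
    exact and_iff_right (Nat.Coprime.pow_left 2 hc)
  · rw [if_neg hc, zero_mul]
    have : ∀ b, ¬ Nat.Coprime (a ^ 2 * b) N := by
      intro b h
      rw [Nat.coprime_mul_iff_left, Nat.coprime_pow_left_iff (by norm_num)] at h
      exact hc h.1
    simp [this]

lemma g_abs (N a : ℕ) : |g N a| ≤ 1 := by
  rw [g]
  split_ifs
  · exact_mod_cast abs_moebius_le_one
  · simp

lemma hasSum_g (N : ℕ) (hN : N ≠ 0) :
    HasSum (fun a : ℕ => g N a / (a : ℝ) ^ 2)
      ((∏ p ∈ N.primeFactors, (1 - 1 / (p : ℝ) ^ 2)) * (Real.pi ^ 2 / 6))⁻¹ := by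
  haveI : NeZero N := ⟨hN⟩
  have hs : (1 : ℝ) < (2 : ℂ).re := by norm_num
  have h1 := DirichletCharacter.LSeries.mul_mu_eq_one (1 : DirichletCharacter ℂ N) hs
  rw [← DirichletCharacter.LFunction_eq_LSeries _ hs] at h1
  have h2 := DirichletCharacter.LFunctionTrivChar_eq_mul_riemannZeta (N := N) (s := 2) (by norm_num)
  rw [DirichletCharacter.LFunctionTrivChar] at h2
  rw [h2, riemannZeta_two] at h1
  have h3 := (DirichletCharacter.LSeriesSummable_mul (1 : DirichletCharacter ℂ N)
    (LSeriesSummable_moebius_iff.2 hs)).LSeriesHasSum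
  rw [eq_inv_of_mul_eq_one_right h1, LSeriesHasSum] at h3
  rw [← Complex.hasSum_ofReal]
  convert h3 using 1
  · ext a
    rw [LSeries.term_def]
    by_cases ha : a = 0
    · simp [ha]
    · rw [if_neg ha, g]
      by_cases hc : Nat.Coprime a N
      · have : IsUnit (a : ZMod N) := (ZMod.isUnit_iff_coprime a N).2 hc
        rw [if_pos hc]
        simp [MulChar.one_apply this]
      · have : ¬ IsUnit (a : ZMod N) := fun h => hc ((ZMod.isUnit_iff_coprime a N).1 h)
        rw [if_neg hc]
        simp [MulChar.map_nonunit _ this]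
  · push_cast
    congr 2
    apply Finset.prod_congr rfl
    intro p _
    rw [Complex.cpow_neg]
    norm_num

lemma tail_bound (N R : ℕ) (hN : N ≠ 0) :
    |(∑ a ∈ Finset.Icc 1 R, g N a / (a : ℝ) ^ 2) -
      ((∏ p ∈ N.primeFactors, (1 - 1 / (p : ℝ) ^ 2)) * (Real.pi ^ 2 / 6))⁻¹| ≤ 2 / ((R : ℝ) + 1) := by
  have h := (hasSum_g N hN).tendsto_sum_nat
  have h' := (h.const_sub (∑ a ∈ Finset.Icc 1 R, g N a / (a : ℝ) ^ 2)).abs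
  refine le_of_tendsto h' ?_
  filter_upwards [Filter.eventually_ge_atTop (R + 1)] with n hn
  have e : ∑ a ∈ Finset.range n, g N a / (a : ℝ) ^ 2 =
      (∑ a ∈ Finset.Icc 1 R, g N a / (a : ℝ) ^ 2) + ∑ a ∈ Finset.Ioo R n, g N a / (a : ℝ) ^ 2 := by
    rw [← Finset.sum_union]
    · symm
      apply Finset.sum_subset
      · intro a
        simp only [Finset.mem_union, Finset.mem_Icc, Finset.mem_Ioo, Finset.mem_range]
        omega
      · intro a ha hb
        simp only [Finset.mem_union, Finset.mem_Icc, Finset.mem_Ioo, Finset.mem_range] at ha hb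
        have : a = 0 := by omega
        simp [this]
    · rw [Finset.disjoint_left]
      intro a
      simp only [Finset.mem_Icc, Finset.mem_Ioo]
      omega
  rw [e, sub_add_cancel_left, abs_neg]
  refine (Finset.abs_sum_le_sum_abs _ _).trans (le_trans ?_ (sum_Ioo_inv_sq_le R n))
  apply Finset.sum_le_sum
  intro a _
  rw [abs_div, div_eq_mul_inv, abs_of_nonneg (by positivity : (0 : ℝ) ≤ (a : ℝ) ^ 2)]
  exact mul_le_of_le_one_left (by positivity) (g_abs N a)

lemma prod_bounds (N : ℕ) : 0 ≤ ∏ p ∈ N.primeFactors, (1 - 1 / (p : ℝ)) ∧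
    ∏ p ∈ N.primeFactors, (1 - 1 / (p : ℝ)) ≤ 1 := by
  have h : ∀ p ∈ N.primeFactors, 0 ≤ 1 - 1 / (p : ℝ) := by
    intro p hp
    have : (1 : ℝ) ≤ p := by exact_mod_cast (Nat.prime_of_mem_primeFactors hp).one_lt.le
    have := (div_le_one (by linarith : (0 : ℝ) < p)).2 this
    linarith
  exact ⟨Finset.prod_nonneg h, Finset.prod_le_one h fun p _ => by
    have : (0 : ℝ) ≤ 1 / p := by positivity
    linarith⟩

lemma prod_id (N : ℕ) : (∏ p ∈ N.primeFactors, (1 - 1 / (p : ℝ))) *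
    ((∏ p ∈ N.primeFactors, (1 - 1 / (p : ℝ) ^ 2)) * (Real.pi ^ 2 / 6))⁻¹ =
    (∏ p ∈ N.primeFactors, (p : ℝ) / (p + 1)) / (Real.pi ^ 2 / 6) := by
  rw [mul_inv, ← mul_assoc, ← Finset.prod_inv_distrib, ← Finset.prod_mul_distrib, ← div_eq_mul_inv]
  congr 1
  apply Finset.prod_congr rfl
  intro p hp
  have h1 : (1 : ℝ) < p := by exact_mod_cast (Nat.prime_of_mem_primeFactors hp).one_lt
  have h2 : (p : ℝ) - 1 ≠ 0 := by linarith
  have h3 : (p : ℝ) + 1 ≠ 0 := by linarith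
  have h4 : (p : ℝ) ≠ 0 := by linarith
  have h5 : (1 - 1 / (p : ℝ) ^ 2) = ((p : ℝ) - 1) * (p + 1) / p ^ 2 := by field_simp; ring
  rw [h5]
  field_simp

lemma main_bound (N : ℕ) (hN : N ≠ 0) (z : ℝ) (hz : 3 ≤ z) :
    |(∑ d ∈ Finset.Icc 1 ⌊z⌋₊, if Squarefree d ∧ Nat.Coprime d N then (1 : ℝ) else 0) -
      z / (Real.pi ^ 2 / 6) * ∏ p ∈ N.primeFactors, (p : ℝ) / (p + 1)| ≤
      3 * z ^ ((1 : ℝ) / 2) * 2 ^ N.primeFactors.card := by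
  rw [← Real.sqrt_eq_rpow, count_eq N _ hN]
  set R := Nat.sqrt ⌊z⌋₊ with hR
  set P := ∏ p ∈ N.primeFactors, (1 - 1 / (p : ℝ)) with hP
  set I := ((∏ p ∈ N.primeFactors, (1 - 1 / (p : ℝ) ^ 2)) * (Real.pi ^ 2 / 6))⁻¹ with hI
  have hz0 : 0 ≤ z := by linarith
  have hid : z / (Real.pi ^ 2 / 6) * ∏ p ∈ N.primeFactors, (p : ℝ) / (p + 1) = z * P * I := by
    rw [mul_assoc, prod_id]; ring
  rw [hid]
  have hR1 : (R : ℝ) ≤ √z := by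
    apply Real.le_sqrt_of_sq_le
    have : R ^ 2 ≤ ⌊z⌋₊ := Nat.sqrt_le' _
    calc (R : ℝ) ^ 2 ≤ (⌊z⌋₊ : ℝ) := by exact_mod_cast this
      _ ≤ z := Nat.floor_le hz0
  have hR2 : √z ≤ (R : ℝ) + 1 := by
    apply Real.sqrt_le_iff.2
    refine ⟨by positivity, ?_⟩
    have : ⌊z⌋₊ + 1 ≤ (R + 1) ^ 2 := Nat.lt_succ_sqrt' _
    calc z ≤ (⌊z⌋₊ : ℝ) + 1 := (Nat.lt_floor_add_one z).le
      _ ≤ ((R : ℝ) + 1) ^ 2 := by exact_mod_cast this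
  have e : (∑ a ∈ Finset.Icc 1 R, g N a * (A N.primeFactors (⌊z⌋₊ / a ^ 2) : ℝ)) - z * P * I =
      (∑ a ∈ Finset.Icc 1 R, g N a * ((A N.primeFactors ⌊z / ((a ^ 2 : ℕ) : ℝ)⌋₊ : ℝ) - z / ((a ^ 2 : ℕ) : ℝ) * P)) +
      z * P * ((∑ a ∈ Finset.Icc 1 R, g N a / (a : ℝ) ^ 2) - I) := by
    rw [mul_sub, Finset.mul_sum, add_sub, ← Finset.sum_add_distrib]
    congr 1
    apply Finset.sum_congr rfl
    intro a _
    rw [Nat.floor_div_natCast]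
    push_cast
    ring
  rw [e]
  have b1 : |∑ a ∈ Finset.Icc 1 R, g N a * ((A N.primeFactors ⌊z / ((a ^ 2 : ℕ) : ℝ)⌋₊ : ℝ) - z / ((a ^ 2 : ℕ) : ℝ) * P)|
      ≤ √z * 2 ^ N.primeFactors.card := by
    refine (Finset.abs_sum_le_sum_abs _ _).trans ?_
    refine (Finset.sum_le_card_nsmul _ _ (2 ^ N.primeFactors.card) ?_).trans ?_
    · intro a _
      rw [abs_mul]
      have := A_bound N.primeFactors (fun p hp => Nat.prime_of_mem_primeFactors hp)
        (z / ((a ^ 2 : ℕ) : ℝ)) (by positivity)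
      exact (mul_le_of_le_one_left (abs_nonneg _) (g_abs N a)).trans this
    · rw [nsmul_eq_mul, Nat.card_Icc]
      simp only [add_tsub_cancel_right]
      gcongr
  have b2 : |z * P * ((∑ a ∈ Finset.Icc 1 R, g N a / (a : ℝ) ^ 2) - I)| ≤ 2 * √z := by
    have hs : 0 < √z := Real.sqrt_pos.2 (by linarith)
    obtain ⟨p0, p1⟩ := prod_bounds N
    rw [abs_mul, abs_of_nonneg (mul_nonneg hz0 p0)]
    calc z * P * |(∑ a ∈ Finset.Icc 1 R, g N a / (a : ℝ) ^ 2) - I|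
        ≤ z * 1 * (2 / √z) := by
          gcongr
          refine (tail_bound N R hN).trans ?_
          gcongr
      _ = 2 * √z := by
          nth_rewrite 1 [← Real.mul_self_sqrt hz0]
          field_simp
  refine (abs_add_le _ _).trans ?_
  have : (1 : ℝ) ≤ 2 ^ N.primeFactors.card := one_le_pow₀ (by norm_num)
  nlinarith [Real.sqrt_nonneg z]

lemma two_pow_omega (ε : ℝ) (hε : 0 < ε) : ∃ C : ℝ, 0 < C ∧ ∀ N : ℕ, N ≠ 0 →
    (2 : ℝ) ^ N.primeFactors.card ≤ C * (N : ℝ) ^ ε := by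
  obtain ⟨K, hK⟩ := exists_nat_ge ((2 : ℝ) ^ (1 / ε))
  refine ⟨2 ^ K, by positivity, ?_⟩
  intro N hN
  have h1 : (2 : ℝ) ^ N.primeFactors.card ≤
      ∏ p ∈ N.primeFactors, ((if p < K then (2 : ℝ) else 1) * (p : ℝ) ^ ε) := by
    rw [← Finset.prod_const]
    apply Finset.prod_le_prod
    · intros; norm_num
    · intro p hp
      have hp1 : (1 : ℝ) ≤ p := by exact_mod_cast (Nat.prime_of_mem_primeFactors hp).one_lt.le
      split_ifs with h
      · have := Real.one_le_rpow hp1 hε.le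
        linarith
      · rw [one_mul]
        push Not at h
        have : (2 : ℝ) ^ (1 / ε) ≤ p := hK.trans (by exact_mod_cast h)
        calc (2 : ℝ) = ((2 : ℝ) ^ (1 / ε)) ^ ε := by
              rw [← Real.rpow_mul (by norm_num), one_div, inv_mul_cancel₀ hε.ne', Real.rpow_one]
          _ ≤ (p : ℝ) ^ ε := by gcongr
  refine h1.trans ?_
  rw [Finset.prod_mul_distrib]
  have h2 : ∏ p ∈ N.primeFactors, (if p < K then (2 : ℝ) else 1) ≤ 2 ^ K := by
    rw [← Finset.prod_filter, Finset.prod_const]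
    apply pow_le_pow_right₀ (by norm_num)
    calc _ ≤ (Finset.range K).card := Finset.card_le_card (by
            intro p hp
            simp only [Finset.mem_filter] at hp
            exact Finset.mem_range.2 hp.2)
      _ = K := Finset.card_range K
  have h3 : ∏ p ∈ N.primeFactors, (p : ℝ) ^ ε ≤ (N : ℝ) ^ ε := by
    rw [Real.finsetProd_rpow _ _ (fun p _ => by positivity)]
    gcongr
    rw [← Nat.cast_prod]
    exact Nat.cast_le.2 (Nat.le_of_dvd (Nat.pos_of_ne_zero hN) (Nat.prod_primeFactors_dvd N))
  gcongr

lemma term_eq (n d : ℕ) (hn : 0 < n) (ho : Odd n) (hsq : IsSquare n) :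
    (if Squarefree (2 * d) then ((jacobiSym (8 * d) n : ℤ) : ℝ) else 0) =
      if Squarefree d ∧ Nat.Coprime d (2 * n) then (1 : ℝ) else 0 := by
  obtain ⟨m, rfl⟩ := hsq
  have hm : Odd m := (Nat.odd_mul.1 ho).1
  have hm0 : m ≠ 0 := by rintro rfl; simp at hn
  have h8 : Nat.Coprime 8 m := by
    have : Nat.Coprime (2 ^ 3) m := Nat.Coprime.pow_left 3 (Nat.coprime_two_left.2 hm)
    simpa using this
  have hg : Int.gcd (8 * (d : ℤ)) m = Nat.gcd (8 * d) m := by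
    rw [← Int.gcd_natCast_natCast]; push_cast; rfl
  have hJ : jacobiSym (8 * d) (m * m) = if Nat.Coprime d m then 1 else 0 := by
    rw [← pow_two, jacobiSym.pow_right]
    split_ifs with h
    · apply jacobiSym.sq_one
      rw [hg]
      exact Nat.Coprime.mul_left h8 h
    · haveI : NeZero m := ⟨hm0⟩
      rw [jacobiSym.eq_zero_iff_not_coprime.2, zero_pow (by norm_num)]
      rw [hg]
      intro h'
      exact h (Nat.coprime_mul_iff_left.1 h').2
  rw [hJ]
  have h2 : Squarefree 2 := Nat.prime_two.squarefree
  have e1 : Squarefree (2 * d) ↔ Squarefree d ∧ Nat.Coprime d 2 := by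
    rw [Nat.squarefree_mul_iff, Nat.coprime_comm]
    tauto
  have e2 : Nat.Coprime d (2 * (m * m)) ↔ Nat.Coprime d 2 ∧ Nat.Coprime d m := by
    rw [Nat.coprime_mul_iff_right, Nat.coprime_mul_iff_right]
    tauto
  by_cases a : Squarefree (2 * d)
  · rw [if_pos a]
    by_cases c : Nat.Coprime d m
    · rw [if_pos c, if_pos ⟨(e1.1 a).1, e2.2 ⟨(e1.1 a).2, c⟩⟩]
      norm_num
    · rw [if_neg c, if_neg (fun h => c (e2.1 h.2).2)]
      norm_num
  · rw [if_neg a, if_neg (fun h => a (e1.2 ⟨h.1, (e2.1 h.2).1⟩))]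

end QCS

/-- For odd positive square `n` and `z ≥ 3`,
`∑_{d ≤ z} μ²(2d) (8d|n) = (z/ζ(2)) ∏_{p ∣ 2n} p/(p+1) + O_ε(z^{1/2+ε} n^ε)`,
where `ζ(2) = π²/6` and the product is over primes dividing `2n`. -/
theorem quadratic_character_sum_square_asymptotic :
    ∀ ε : ℝ, 0 < ε → ∃ C : ℝ, 0 < C ∧
      ∀ (n : ℕ) (z : ℝ), 0 < n → Odd n → IsSquare n → 3 ≤ z →
        |(∑ d ∈ Finset.Icc 1 ⌊z⌋₊,
            if Squarefree (2 * d) then ((jacobiSym (8 * d) n : ℤ) : ℝ) else 0) -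
          z / (Real.pi ^ 2 / 6) * ∏ p ∈ (2 * n).primeFactors, (p : ℝ) / (p + 1)| ≤
        C * z ^ ((1 : ℝ) / 2 + ε) * (n : ℝ) ^ ε := by
  intro ε hε
  obtain ⟨C, hC, hω⟩ := QCS.two_pow_omega ε hε
  refine ⟨3 * C * 2 ^ ε, by positivity, ?_⟩
  intro n z hn ho hsq hz
  rw [Finset.sum_congr rfl (fun d _ => QCS.term_eq n d hn ho hsq)]
  have hN : 2 * n ≠ 0 := by omega
  refine (QCS.main_bound (2 * n) hN z hz).trans ?_
  have h1 := hω (2 * n) hN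
  have h2 : (((2 * n : ℕ) : ℝ)) ^ ε = 2 ^ ε * (n : ℝ) ^ ε := by
    push_cast
    rw [Real.mul_rpow (by norm_num) (by positivity)]
  rw [h2] at h1
  have h3 : z ^ ((1 : ℝ) / 2) ≤ z ^ ((1 : ℝ) / 2 + ε) :=
    Real.rpow_le_rpow_of_exponent_le (by linarith) (by linarith)
  calc 3 * z ^ ((1 : ℝ) / 2) * 2 ^ (2 * n).primeFactors.card
      ≤ 3 * z ^ ((1 : ℝ) / 2 + ε) * (C * (2 ^ ε * (n : ℝ) ^ ε)) := by gcongr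
    _ = _ := by ring
end

section
/- Let B_r be the multiplicative function with B_r(p) = 0, B_r(p²) = r(r-1)/2, and B_r(p^a) bounded polynomially in a uniformly in p, and B_r(n) = 0 unless n is a square. Then as z → ∞, Σ_{n ≤ z} B_r(n)/√n ∼ C_r (log z)^{r(r-1)/2} for some constant C_r > 0. -/
open Filter

namespace BrAux
open Finset ArithmeticFunction
open scoped ArithmeticFunction.zeta ArithmeticFunction.Moebius Topology

/-- Logarithmic partial sums. -/
noncomputable def S (f : ArithmeticFunction ℝ) (N : ℕ) : ℝ := ∑ n ∈ Ioc 0 N, f n / (n : ℝ)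

/-- Polynomial boundedness on prime powers. -/
def PB (f : ArithmeticFunction ℝ) : Prop :=
  ∃ A : ℝ, ∃ D : ℕ, 0 ≤ A ∧ ∀ p a : ℕ, p.Prime → |f (p ^ a)| ≤ A * ((a : ℝ) + 1) ^ D

/-- f(n)/n -/
noncomputable def tw (f : ArithmeticFunction ℝ) : ArithmeticFunction ℝ := ⟨fun n => f n / (n : ℝ), by simp⟩

lemma tw_apply (f : ArithmeticFunction ℝ) (n : ℕ) : tw f n = f n / (n : ℝ) := rfl

lemma tw_mul (f g : ArithmeticFunction ℝ) : tw (f * g) = tw f * tw g := by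
  ext n
  rw [tw_apply, mul_apply, mul_apply, sum_div]
  refine sum_congr rfl fun x hx => ?_
  have := (Nat.mem_divisorsAntidiagonal.1 hx).1
  rw [tw_apply, tw_apply, ← this]
  push_cast
  rw [div_mul_div_comm]

lemma S_mul (f g : ArithmeticFunction ℝ) (N : ℕ) :
    S (f * g) N = ∑ n ∈ Ioc 0 N, f n / (n : ℝ) * S g (N / n) := by
  have := sum_Ioc_mul_eq_sum_sum (tw f) (tw g) N
  rw [← tw_mul] at this
  exact this

/-- absolute value -/
noncomputable def ab (f : ArithmeticFunction ℝ) : ArithmeticFunction ℝ := ⟨fun n => |f n|, by simp⟩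

lemma ab_apply (f : ArithmeticFunction ℝ) (n : ℕ) : ab f n = |f n| := rfl

lemma ab_mult {f : ArithmeticFunction ℝ} (hf : f.IsMultiplicative) : (ab f).IsMultiplicative := by
  refine ⟨by simp [ab_apply, hf.1], ?_⟩
  intro m n h
  simp [ab_apply, hf.2 h, abs_mul]

lemma ab_PB {f : ArithmeticFunction ℝ} (hf : PB f) : PB (ab f) := by
  obtain ⟨A, D, h0, h⟩ := hf
  exact ⟨A, D, h0, fun p a hp => by rw [ab_apply, abs_abs]; exact h p a hp⟩

lemma S_zeta (N : ℕ) : S (ζ : ArithmeticFunction ℝ) N = harmonic N := by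
  rw [harmonic_eq_sum_Icc]
  push_cast
  refine sum_congr ?_ fun n hn => ?_
  · ext; simp [Nat.succ_le_iff]
  · simp at hn
    simp [natCoe_apply, zeta_apply, Nat.pos_iff_ne_zero.1 hn.1]

lemma S_succ (f : ArithmeticFunction ℝ) (N : ℕ) :
    S f (N+1) = S f N + f (N+1) / ((N+1 : ℕ) : ℝ) := by
  unfold S
  rw [sum_Ioc_succ_top (by omega)]

/-- Base case. -/
lemma base_summable {f : ArithmeticFunction ℝ} (hf : f.IsMultiplicative) (hp : ∀ p : ℕ, p.Prime → f p = 0)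
    (hb : PB f) (hnn : ∀ n, 0 ≤ f n) : ∃ M, ∀ N, S f N ≤ M := by
  obtain ⟨A, D, hA, hAD⟩ := hb
  have hsum0 : Summable (fun b : ℕ => ((b : ℝ) + 3) ^ D * (1/2 : ℝ) ^ b) := by
    have h1 := summable_pow_mul_geometric_of_norm_lt_one D (r := (1/2 : ℝ)) (by norm_num)
    have h2 := ((summable_nat_add_iff 3).2 h1).mul_left 8
    refine h2.congr fun b => ?_
    push_cast
    rw [pow_add]; ring
  set K := ∑' b : ℕ, A * (((b : ℝ) + 3) ^ D * (1/2 : ℝ) ^ b) with hK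
  have hK0 : 0 ≤ K := tsum_nonneg fun b => by positivity
  -- per prime
  have hterm : ∀ p : ℕ, p.Prime → ∀ b : ℕ, tw f (p ^ (b+2)) ≤
      (1 / (p:ℝ)^2) * (A * (((b : ℝ) + 3) ^ D * (1/2 : ℝ) ^ b)) := by
    intro p pp b
    have hp2 : (2:ℝ) ≤ p := by exact_mod_cast pp.two_le
    rw [tw_apply]
    have h1 := (le_abs_self _).trans (hAD p (b+2) pp)
    push_cast at h1 ⊢
    have h2 : ((p:ℝ)^(b+2))⁻¹ ≤ (1/(p:ℝ)^2) * (1/2)^b := by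
      rw [pow_add, mul_inv, mul_comm, one_div, ← inv_pow]
      gcongr
      rw [one_div, ← inv_pow]
      gcongr
    rw [div_eq_mul_inv]
    calc _ ≤ (A * ((b:ℝ) + 2 + 1)^D) * ((1/(p:ℝ)^2) * (1/2)^b) := by
          gcongr
      _ = _ := by ring
  have hs2 : ∀ p : ℕ, p.Prime → Summable (fun b : ℕ => tw f (p ^ (b+2))) := fun p pp =>
    Summable.of_nonneg_of_le (fun b => div_nonneg (hnn _) (by positivity)) (hterm p pp)
      ((hsum0.mul_left A).mul_left _)
  have hs : ∀ p : ℕ, p.Prime → Summable (fun b : ℕ => tw f (p ^ b)) := fun p pp =>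
    (summable_nat_add_iff 2).1 (hs2 p pp)
  have hval : ∀ p : ℕ, p.Prime → ∑' b : ℕ, tw f (p ^ b) ≤ 1 + K / (p:ℝ)^2 := by
    intro p pp
    rw [← (hs p pp).sum_add_tsum_nat_add 2]
    have : ∑ i ∈ range 2, tw f (p^i) = 1 := by
      simp [sum_range_succ, tw_apply, hf.1, hp p pp]
    rw [this]
    have := (hs2 p pp).tsum_le_tsum (hterm p pp) ((hsum0.mul_left A).mul_left _)
    rw [tsum_mul_left] at this
    rw [div_eq_mul_one_div, mul_comm K]
    linarith
  have hsq : Summable (fun n : ℕ => K / (n:ℝ)^2) := by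
    have := (Real.summable_one_div_nat_pow (p := 2)).2 (by norm_num)
    exact (this.mul_left K).congr fun n => by ring
  refine ⟨Real.exp (∑' n : ℕ, K / (n:ℝ)^2), fun N => ?_⟩
  have hmult : ∀ {m n : ℕ}, m.Coprime n → tw f (m * n) = tw f m * tw f n := by
    intro m n h
    simp only [tw_apply, hf.2 h]
    push_cast
    rw [div_mul_div_comm]
  have key := EulerProduct.summable_and_hasSum_factoredNumbers_prod_filter_prime_tsum
    (f := tw f) (by simp [tw_apply, hf.1]) hmult
    (fun {p} pp => (hs p pp).congr fun b => by
      rw [Real.norm_of_nonneg]; exact div_nonneg (hnn _) (by positivity)) (range (N+1))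
  have h1 : S f N ≤ ∏ p ∈ range (N+1) with p.Prime, ∑' n : ℕ, tw f (p ^ n) := by
    rw [← key.2.tsum_eq]
    have hind : ∑' m : Nat.factoredNumbers (range (N+1)), tw f m =
      ∑' m : ℕ, (Nat.factoredNumbers (range (N+1)) : Set ℕ).indicator (tw f) m := tsum_subtype _ _
    rw [hind]
    have hsm : Summable ((Nat.factoredNumbers (range (N+1)) : Set ℕ).indicator (tw f)) := by
      rw [← summable_subtype_iff_indicator]
      exact key.2.summable
    refine le_trans (le_of_eq ?_) (hsm.sum_le_tsum (Ioc 0 N) fun m _ => ?_)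
    · refine sum_congr rfl fun n hn => ?_
      rw [Set.indicator_of_mem]
      · rfl
      · simp only [Finset.mem_Ioc] at hn
        rw [Nat.mem_factoredNumbers']
        intro p pp hd
        have := Nat.le_of_dvd hn.1 hd
        simp; omega
    · exact Set.indicator_nonneg (fun m _ => div_nonneg (hnn _) (by positivity)) _
  refine h1.trans ?_
  calc _ ≤ ∏ p ∈ range (N+1) with p.Prime, Real.exp (K / (p:ℝ)^2) := by
        refine prod_le_prod (fun p _ => tsum_nonneg fun b => div_nonneg (hnn _) (by positivity)) fun p hp' => ?_
        have := hval p (by simp at hp'; exact hp'.2)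
        have h2 := Real.add_one_le_exp (K / (p:ℝ)^2)
        linarith
    _ = Real.exp (∑ p ∈ range (N+1) with p.Prime, K / (p:ℝ)^2) := (Real.exp_sum _ _).symm
    _ ≤ _ := by
        apply Real.exp_le_exp.2
        exact hsq.sum_le_tsum _ fun _ _ => by positivity

lemma S_mono_of_nonneg {f : ArithmeticFunction ℝ} (hnn : ∀ n, 0 ≤ f n) : Monotone (S f) := by
  refine monotone_nat_of_le_succ fun n => ?_
  rw [S_succ]
  have : 0 ≤ f (n+1) / ((n+1 : ℕ) : ℝ) := div_nonneg (hnn _) (by positivity)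
  linarith

lemma base {f : ArithmeticFunction ℝ} (hf : f.IsMultiplicative) (hp : ∀ p : ℕ, p.Prime → f p = 0)
    (hb : PB f) : ∃ C, Tendsto (S f) atTop (𝓝 C) := by
  obtain ⟨M, hM⟩ := base_summable (ab_mult hf) (fun p pp => by simp [ab_apply, hp p pp]) (ab_PB hb)
    (fun n => abs_nonneg _)
  have hs : Summable (fun n : ℕ => f (n+1) / ((n+1 : ℕ) : ℝ)) := by
    apply Summable.of_abs
    refine summable_of_sum_range_le (c := M) (fun _ => abs_nonneg _) fun n => ?_
    refine le_trans (le_of_eq ?_) (hM n)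
    induction n with
    | zero => simp [S]
    | succ n ih =>
      rw [sum_range_succ, S_succ, ih, ab_apply, abs_div]
      simp
      rw [abs_of_nonneg (by positivity : (0:ℝ) ≤ (n:ℝ)+1)]
  refine ⟨_, hs.hasSum.tendsto_sum_nat.congr fun n => ?_⟩
  induction n with
  | zero => simp [S]
  | succ n ih => rw [sum_range_succ, S_succ, ih]

lemma tendsto_log_nat : Tendsto (fun n : ℕ => Real.log n) atTop atTop :=
  Real.tendsto_log_atTop.comp tendsto_natCast_atTop_atTop

lemma log_ratio : Tendsto (fun n : ℕ => Real.log ((n+1 : ℕ) : ℝ) / Real.log n) atTop (𝓝 1) := by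
  have h2 : Tendsto (fun n : ℕ => (1 : ℝ) + Real.log 2 / Real.log n) atTop (𝓝 1) := by
    have := (tendsto_log_nat.const_div_atTop (Real.log 2)).const_add 1
    simpa using this
  refine tendsto_of_tendsto_of_tendsto_of_le_of_le' tendsto_const_nhds h2 ?_ ?_
  · filter_upwards [eventually_ge_atTop 2] with n hn
    have hn' : (2:ℝ) ≤ n := by exact_mod_cast hn
    have : 0 < Real.log n := Real.log_pos (by linarith)
    rw [le_div_iff₀ this, one_mul]
    exact Real.log_le_log (by linarith) (by push_cast; linarith)
  · filter_upwards [eventually_ge_atTop 2] with n hn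
    have hn' : (2:ℝ) ≤ n := by exact_mod_cast hn
    have : 0 < Real.log n := Real.log_pos (by linarith)
    rw [div_le_iff₀ this, add_mul, div_mul_cancel₀ _ this.ne', one_mul,
      ← Real.log_mul (by linarith) two_ne_zero]
    exact Real.log_le_log (by positivity) (by push_cast; linarith)

/-- Abel-summation part. -/
lemma abel {s : ℕ → ℝ} {k : ℕ} {C : ℝ}
    (h : Tendsto (fun N => s N / Real.log N ^ k) atTop (𝓝 C)) :
    Tendsto (fun N : ℕ => (∑ n ∈ range N, s n * (Real.log ((n+1 : ℕ) : ℝ) - Real.log n)) / Real.log N ^ (k+1))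
      atTop (𝓝 (C / (k+1))) := by
  set v : ℕ → ℝ := fun n => Real.log ((n+1 : ℕ) : ℝ) ^ (k+1) - Real.log n ^ (k+1) with hv
  set u : ℕ → ℝ := fun n => s n * (Real.log ((n+1 : ℕ) : ℝ) - Real.log n) with hu
  have hlog0 : ∀ n : ℕ, 0 ≤ Real.log n := fun n => Real.log_natCast_nonneg n
  have hlogm : ∀ n : ℕ, Real.log n ≤ Real.log ((n+1 : ℕ) : ℝ) := by
    intro n
    rcases Nat.eq_zero_or_pos n with rfl | hn
    · simp
    · exact Real.log_le_log (by exact_mod_cast hn) (by push_cast; linarith)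
  have hv0 : 0 ≤ v := fun n => sub_nonneg.2 (pow_le_pow_left₀ (hlog0 n) (hlogm n) _)
  have hsv : ∀ N, ∑ n ∈ range N, v n = Real.log N ^ (k+1) := by
    intro N
    have := Finset.sum_range_sub (fun n : ℕ => Real.log n ^ (k+1)) N
    simp only [hv]
    rw [this]; simp
  have hratio : Tendsto (fun n => u n / v n) atTop (𝓝 (C / (k+1))) := by
    have hden : Tendsto (fun n : ℕ => ∑ i ∈ range (k+1), (Real.log ((n+1 : ℕ) : ℝ) / Real.log n) ^ i)
        atTop (𝓝 ((k:ℝ)+1)) := by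
      have := tendsto_finsetSum (range (k+1)) fun i _ => log_ratio.pow i
      simpa using this
    refine (h.div hden (by positivity)).congr' ?_
    filter_upwards [eventually_ge_atTop 2] with n hn
    have hn' : (2:ℝ) ≤ n := by exact_mod_cast hn
    have hl : 0 < Real.log n := Real.log_pos (by linarith)
    have hd : 0 < Real.log ((n+1 : ℕ) : ℝ) - Real.log n :=
      sub_pos.2 (Real.log_lt_log (by linarith) (by push_cast; linarith))
    have hvn : v n = (Real.log n ^ k * ∑ i ∈ range (k+1), (Real.log ((n+1 : ℕ) : ℝ) / Real.log n) ^ i) *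
        (Real.log ((n+1 : ℕ) : ℝ) - Real.log n) := by
      simp only [hv]
      rw [← (Commute.all _ _).geom_sum₂_mul, mul_sum]
      congr 1
      refine sum_congr rfl fun i hi => ?_
      simp at hi
      rw [div_pow]
      have : Real.log n ^ k = Real.log n ^ i * Real.log n ^ (k - i) := by
        rw [← pow_add]; congr 1; omega
      rw [this, Nat.add_sub_cancel]
      field_simp
    rw [hvn]
    simp only [hu, Pi.div_apply]
    rw [mul_div_mul_right _ _ hd.ne', div_div]
  have hlit : (fun n => u n - C/(k+1) * v n) =o[atTop] v := by
    rw [Asymptotics.isLittleO_iff_tendsto']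
    · have := hratio.sub_const (C/(k+1))
      rw [sub_self] at this
      refine this.congr' ?_
      filter_upwards [eventually_ge_atTop 2] with n hn
      have hn' : (2:ℝ) ≤ n := by exact_mod_cast hn
      have hl : 0 < Real.log n := Real.log_pos (by linarith)
      have : 0 < v n := sub_pos.2 (pow_lt_pow_left₀
        (Real.log_lt_log (by linarith) (by push_cast; linarith)) hl.le (by omega))
      field_simp
    · filter_upwards [eventually_ge_atTop 2] with n hn h0
      have hn' : (2:ℝ) ≤ n := by exact_mod_cast hn
      have hl : 0 < Real.log n := Real.log_pos (by linarith)
      have : 0 < v n := sub_pos.2 (pow_lt_pow_left₀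
        (Real.log_lt_log (by linarith) (by push_cast; linarith)) hl.le (by omega))
      exact absurd h0 this.ne'
  have htop : Tendsto (fun n => ∑ i ∈ range n, v i) atTop atTop := by
    simp_rw [hsv]
    exact (tendsto_pow_atTop (by omega)).comp tendsto_log_nat
  have h3 := (hlit.sum_range hv0 htop).tendsto_div_nhds_zero
  have h4 := h3.add_const (C/(k+1))
  rw [zero_add] at h4
  refine h4.congr' ?_
  filter_upwards [eventually_ge_atTop 2] with n hn
  have hn' : (2:ℝ) ≤ n := by exact_mod_cast hn
  have hl : 0 < Real.log n ^ (k+1) := pow_pos (Real.log_pos (by linarith)) _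
  rw [sum_sub_distrib, ← mul_sum, hsv]
  field_simp
  ring

lemma U_eq (h : ArithmeticFunction ℝ) (N : ℕ) :
    ∑ d ∈ Ioc 0 N, h d / (d:ℝ) * (Real.log N - Real.log d) =
      ∑ n ∈ range N, S h n * (Real.log ((n+1 : ℕ) : ℝ) - Real.log n) := by
  induction N with
  | zero => simp
  | succ N ih =>
    rw [sum_range_succ, ← ih, sum_Ioc_succ_top (by omega)]
    unfold S
    rw [sum_mul, ← sum_add_distrib]
    simp only [sub_self, mul_zero, add_zero]
    refine sum_congr rfl fun d hd => ?_
    ring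

lemma step {h : ArithmeticFunction ℝ} {k : ℕ} {C C' : ℝ}
    (hC : Tendsto (fun N => S h N / Real.log N ^ k) atTop (𝓝 C))
    (hC' : Tendsto (fun N => S (ab h) N / Real.log N ^ k) atTop (𝓝 C')) :
    Tendsto (fun N => S (h * (ζ : ArithmeticFunction ℝ)) N / Real.log N ^ (k+1)) atTop (𝓝 (C / (k+1))) := by
  have hU := abel hC
  have hE : Tendsto (fun N => (S (h * (ζ : ArithmeticFunction ℝ)) N -
      ∑ d ∈ Ioc 0 N, h d / (d:ℝ) * (Real.log N - Real.log d)) / Real.log N ^ (k+1)) atTop (𝓝 0) := by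
    have hz : Tendsto (fun N : ℕ => (S (ab h) N / Real.log N ^ k) / Real.log N) atTop (𝓝 0) :=
      hC'.div_atTop tendsto_log_nat
    refine squeeze_zero_norm (fun N => ?_) hz
    rw [Real.norm_eq_abs, abs_div, div_div, ← pow_succ, abs_of_nonneg (a := Real.log N ^ (k+1))
      (pow_nonneg (Real.log_natCast_nonneg N) _)]
    refine div_le_div_of_nonneg_right ?_ (pow_nonneg (Real.log_natCast_nonneg N) _)
    rw [S_mul, ← sum_sub_distrib]
    refine (abs_sum_le_sum_abs _ _).trans (sum_le_sum fun d hd => ?_)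
    simp only [Finset.mem_Ioc] at hd
    have hd0 : (0:ℝ) < d := by exact_mod_cast hd.1
    have hN0 : (0:ℝ) < N := by exact_mod_cast hd.1.trans_le hd.2
    rw [← mul_sub, abs_mul, abs_div, Nat.abs_cast, ab_apply, S_zeta]
    have hfl : ⌊(N:ℝ) / d⌋₊ = N / d := Nat.floor_div_eq_div N d
    have hy : 1 ≤ (N:ℝ)/d := by rw [le_div_iff₀ hd0, one_mul]; exact_mod_cast hd.2
    have h1 := log_le_harmonic_floor ((N:ℝ)/d) (by positivity)
    have h2 := harmonic_floor_le_one_add_log ((N:ℝ)/d) hy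
    rw [hfl, Real.log_div hN0.ne' hd0.ne'] at h1 h2
    refine mul_le_of_le_one_right (by positivity) (abs_le.2 ⟨by linarith, by linarith⟩)
  have := hE.add hU
  rw [zero_add] at this
  refine this.congr fun N => ?_
  rw [← U_eq, ← add_div]; congr 1; ring

lemma mul_zeta_prime_pow (h : ArithmeticFunction ℝ) {p : ℕ} (pp : p.Prime) (a : ℕ) :
    (h * (ζ : ArithmeticFunction ℝ)) (p ^ a) = ∑ i ∈ range (a+1), h (p ^ i) := by
  rw [coe_mul_zeta_apply, Nat.sum_divisors_prime_pow pp]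

lemma claim (k : ℕ) : ∀ f : ArithmeticFunction ℝ, f.IsMultiplicative →
    (∀ p : ℕ, p.Prime → f p = k) → PB f →
    ∃ C, Tendsto (fun N => S f N / Real.log N ^ k) atTop (𝓝 C) := by
  induction k with
  | zero =>
    intro f hf hp hb
    obtain ⟨C, hC⟩ := base hf (by simpa using hp) hb
    exact ⟨C, by simpa using hC⟩
  | succ k ih =>
    intro f hf hp hb
    set h : ArithmeticFunction ℝ := f * ((μ : ArithmeticFunction ℤ) : ArithmeticFunction ℝ) with hh
    have hm : h.IsMultiplicative := hf.mul isMultiplicative_moebius.intCast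
    have hz : h * (ζ : ArithmeticFunction ℝ) = f := by
      rw [hh, mul_assoc, coe_moebius_mul_coe_zeta, mul_one]
    have hpow : ∀ p a : ℕ, p.Prime → h (p ^ (a+1)) = f (p ^ (a+1)) - f (p ^ a) := by
      intro p a pp
      conv_rhs => rw [← hz]
      rw [mul_zeta_prime_pow h pp, mul_zeta_prime_pow h pp, sum_range_succ _ (a+1)]
      ring
    have hp' : ∀ p : ℕ, p.Prime → h p = k := by
      intro p pp
      have := hpow p 0 pp
      simp only [zero_add, pow_one, pow_zero, hf.1, hp p pp] at this
      rw [this]; push_cast; ring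
    have hb' : PB h := by
      obtain ⟨A, D, hA, hAD⟩ := hb
      refine ⟨2 * A + 1, D, by linarith, fun p a pp => ?_⟩
      rcases a with _ | a
      · simp [hm.1]; linarith
      · rw [hpow p a pp]
        have h1 := hAD p (a+1) pp
        have h2 := hAD p a pp
        have h3 : A * ((a:ℝ)+1)^D ≤ A * (((a+1 : ℕ):ℝ)+1)^D := by
          gcongr; simp
        have h4 : 0 ≤ (((a+1 : ℕ):ℝ)+1)^D := by positivity
        have := abs_sub (f (p^(a+1))) (f (p^a))
        nlinarith
    obtain ⟨C, hC⟩ := ih h hm hp' hb'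
    obtain ⟨C', hC'⟩ := ih (ab h) (ab_mult hm) (fun p pp => by simp [ab_apply, hp' p pp]) (ab_PB hb')
    refine ⟨C / (k+1), ?_⟩
    have := step hC hC'
    rwa [hz] at this

/-- The k-fold divisor function. -/
lemma zeta_pow (k : ℕ) : ∃ f : ArithmeticFunction ℝ, f.IsMultiplicative ∧
    (∀ p : ℕ, p.Prime → f p = k) ∧ PB f ∧ (∀ n, 0 ≤ f n) ∧
    ∃ C, 0 < C ∧ Tendsto (fun N => S f N / Real.log N ^ k) atTop (𝓝 C) := by
  induction k with
  | zero =>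
    refine ⟨1, isMultiplicative_one, fun p pp => by simp [one_apply_ne pp.ne_one],
      ⟨1, 0, by norm_num, fun p a _ => ?_⟩, fun n => ?_, 1, one_pos, ?_⟩
    · rw [one_apply]; split_ifs <;> simp
    · rw [one_apply]; split_ifs <;> simp
    · simp only [pow_zero, div_one]
      refine tendsto_const_nhds.congr' ?_
      filter_upwards [eventually_ge_atTop 1] with N hN
      unfold S
      rw [sum_eq_single 1]
      · simp
      · intro b _ hb; simp [one_apply_ne hb]
      · intro h; exact absurd h (by simp; omega)
  | succ k ih =>
    obtain ⟨f, hf, hp, ⟨A, D, hA, hAD⟩, hnn, C, hC0, hC⟩ := ih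
    have hab : ab f = f := by ext n; simp [ab_apply, abs_of_nonneg (hnn n)]
    refine ⟨f * (ζ : ArithmeticFunction ℝ), hf.mul isMultiplicative_zeta.natCast, ?_, ⟨A, D+1, hA, ?_⟩, ?_,
      C / (k+1), by positivity, step hC (by rw [hab]; exact hC)⟩
    · intro p pp
      have := mul_zeta_prime_pow f pp 1
      rw [pow_one] at this
      rw [this]
      simp [sum_range_succ, hf.1, hp p pp]
      ring
    · intro p a pp
      rw [mul_zeta_prime_pow f pp]
      refine (abs_sum_le_sum_abs _ _).trans ?_
      calc _ ≤ ∑ i ∈ range (a+1), A * ((a:ℝ)+1)^D := by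
            refine sum_le_sum fun i hi => (hAD p i pp).trans ?_
            simp at hi
            have : (i:ℝ) ≤ a := by exact_mod_cast hi
            gcongr
        _ = _ := by simp; ring
    · intro n
      rw [coe_mul_zeta_apply]
      exact sum_nonneg fun i _ => hnn i

/-- squarefull part -/
noncomputable def sf (f : ArithmeticFunction ℝ) : ArithmeticFunction ℝ :=
  ⟨fun n => if n = 0 then 0 else n.factorization.prod fun p a => if a = 1 then 0 else f (p ^ a), by simp⟩

lemma sf_mult (f : ArithmeticFunction ℝ) : (sf f).IsMultiplicative := by
  refine ⟨by simp [sf], ?_⟩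
  intro m n h
  simp only [sf, ArithmeticFunction.coe_mk]
  rcases eq_or_ne m 0 with rfl | hm
  · simp
  rcases eq_or_ne n 0 with rfl | hn
  · simp
  rw [if_neg (mul_ne_zero hm hn), if_neg hm, if_neg hn, Nat.factorization_mul_of_coprime h,
    Finsupp.prod_add_index_of_disjoint]
  simpa using h.disjoint_primeFactors

lemma sf_nonneg {f : ArithmeticFunction ℝ} (hf : ∀ n, 0 ≤ f n) (n : ℕ) : 0 ≤ sf f n := by
  simp only [sf, ArithmeticFunction.coe_mk]
  split_ifs
  · rfl
  · refine prod_nonneg fun p _ => ?_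
    dsimp only
    split_ifs
    · rfl
    · exact hf _

lemma sf_prime_pow {f : ArithmeticFunction ℝ} (hf : f 1 = 1) {p : ℕ} (pp : p.Prime) (a : ℕ) :
    sf f (p ^ a) = if a = 1 then 0 else f (p ^ a) := by
  simp only [sf, ArithmeticFunction.coe_mk]
  rw [if_neg (pow_ne_zero _ pp.ne_zero), pp.factorization_pow, Finsupp.prod_single_index]
  simp [hf]

lemma le_of_prime_pow {f g : ArithmeticFunction ℝ} (hf : f.IsMultiplicative) (hg : g.IsMultiplicative)
    (hnn : ∀ n, 0 ≤ f n) (h : ∀ p a : ℕ, p.Prime → f (p ^ a) ≤ g (p ^ a)) (n : ℕ) : f n ≤ g n := by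
  induction n using Nat.recOnPrimeCoprime with
  | zero => simp
  | prime_pow p a pp => exact h p a pp
  | coprime a b _ _ hab ha hb =>
    rw [hf.2 hab, hg.2 hab]
    exact mul_le_mul ha hb (hnn _) ((hnn _).trans ha)

lemma main (k : ℕ) (g : ArithmeticFunction ℝ) (hg : g.IsMultiplicative)
    (hp : ∀ p : ℕ, p.Prime → g p = k) (hb : PB g) (hnn : ∀ n, 0 ≤ g n) :
    ∃ C, 0 < C ∧ Tendsto (fun N => S g N / Real.log N ^ k) atTop (𝓝 C) := by
  obtain ⟨C, hC⟩ := claim k g hg hp hb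
  obtain ⟨d, hd, hdp, hdb, hdn, T, hT0, hT⟩ := zeta_pow k
  have hwn := sf_nonneg hdn
  have hwb : PB (sf d) := by
    obtain ⟨A, D, hA, hAD⟩ := hdb
    refine ⟨A, D, hA, fun p a pp => ?_⟩
    rw [sf_prime_pow hd.1 pp]
    split_ifs
    · rw [abs_zero]; positivity
    · exact hAD p a pp
  obtain ⟨M, hM⟩ := base_summable (sf_mult d) (fun p pp => by
    have := sf_prime_pow hd.1 pp 1
    simpa using this) hwb hwn
  have hle : ∀ n, d n ≤ (g * sf d) n := by
    refine le_of_prime_pow hd (hg.mul (sf_mult d)) hdn fun p a pp => ?_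
    have hpa : p ^ a ≠ 0 := pow_ne_zero _ pp.ne_zero
    rw [mul_apply]
    by_cases ha : a = 1
    · subst ha
      refine le_trans (le_of_eq ?_) (single_le_sum (f := fun x : ℕ × ℕ => g x.1 * sf d x.2)
        (fun x _ => mul_nonneg (hnn _) (hwn _))
        (Nat.mem_divisorsAntidiagonal (x := (p ^ 1, 1)) |>.2 ⟨mul_one (p ^ 1), hpa⟩))
      simp [(sf_mult d).1, hdp p pp, hp p pp]
    · refine le_trans (le_of_eq ?_) (single_le_sum (f := fun x : ℕ × ℕ => g x.1 * sf d x.2)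
        (fun x _ => mul_nonneg (hnn _) (hwn _))
        (Nat.mem_divisorsAntidiagonal (x := (1, p ^ a)) |>.2 ⟨one_mul (p ^ a), hpa⟩))
      simp [hg.1, sf_prime_pow hd.1 pp, ha]
  have hS : ∀ N, S d N ≤ S g N * M := by
    intro N
    calc S d N ≤ S (g * sf d) N := sum_le_sum fun n _ => by
            have := hle n; gcongr
      _ = _ := S_mul _ _ _
      _ ≤ ∑ n ∈ Ioc 0 N, g n / (n : ℝ) * M := sum_le_sum fun n _ =>
            mul_le_mul_of_nonneg_left (hM _) (div_nonneg (hnn _) (by positivity))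
      _ = _ := by rw [← sum_mul]; rfl
  have hlim : T ≤ C * M := by
    refine le_of_tendsto_of_tendsto' hT (hC.mul_const M) fun N => ?_
    rw [div_mul_eq_mul_div]
    exact div_le_div_of_nonneg_right (hS N) (pow_nonneg (Real.log_natCast_nonneg N) _)
  have hC0 : 0 ≤ C := ge_of_tendsto' hC fun N =>
    div_nonneg (sum_nonneg fun n _ => div_nonneg (hnn _) (by positivity))
      (pow_nonneg (Real.log_natCast_nonneg N) _)
  refine ⟨C, lt_of_le_of_ne hC0 ?_, hC⟩
  rintro rfl
  linarith

lemma log_floor_ratio : Tendsto (fun z : ℝ => Real.log (⌊Real.sqrt z⌋₊ : ℝ) / Real.log z) atTop (𝓝 (1/2)) := by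
  have hs : Tendsto (fun z : ℝ => Real.sqrt z) atTop atTop := Real.tendsto_sqrt_atTop
  have h1 : Tendsto (fun z : ℝ => (⌊Real.sqrt z⌋₊ : ℝ) / Real.sqrt z) atTop (𝓝 1) :=
    (tendsto_nat_floor_div_atTop (R := ℝ)).comp hs
  have h2 := (Real.continuousAt_log one_ne_zero).tendsto.comp h1
  have h3 := (h2.div_atTop Real.tendsto_log_atTop).add_const (1/2)
  rw [zero_add] at h3
  refine h3.congr' ?_
  filter_upwards [eventually_ge_atTop 2] with z hz
  have hl : 0 < Real.log z := Real.log_pos (by linarith)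
  have h1s : 1 ≤ Real.sqrt z := Real.one_le_sqrt.2 (by linarith)
  have hfl : (0:ℝ) < (⌊Real.sqrt z⌋₊ : ℝ) := by exact_mod_cast Nat.floor_pos.2 h1s
  simp only [Function.comp]
  rw [Real.log_div hfl.ne' (by positivity), Real.log_sqrt (by linarith)]
  field_simp
  ring

lemma sum_squares {B : ℕ → ℝ} (hsq : ∀ n : ℕ, 0 < n → ¬ IsSquare n → B n = 0) (z : ℝ) (hz : 0 ≤ z) :
    ∑ n ∈ Icc 1 ⌊z⌋₊, B n / Real.sqrt n = ∑ m ∈ Ioc 0 ⌊Real.sqrt z⌋₊, B (m ^ 2) / (m : ℝ) := by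
  symm
  have hle : ∀ m : ℕ, m ≤ ⌊Real.sqrt z⌋₊ ↔ m ^ 2 ≤ ⌊z⌋₊ := by
    intro m
    rw [Nat.le_floor_iff (Real.sqrt_nonneg z), Nat.le_floor_iff hz, Real.le_sqrt (by positivity) hz]
    push_cast; rfl
  refine sum_of_injOn (fun m => m ^ 2) ?_ ?_ ?_ ?_
  · intro a _ b _ h
    exact Nat.pow_left_injective (by norm_num : 2 ≠ 0) h
  · intro m hm
    simp only [coe_Ioc, Set.mem_Ioc, coe_Icc, Set.mem_Icc] at hm ⊢
    exact ⟨Nat.one_le_pow _ _ hm.1, (hle m).1 hm.2⟩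
  · intro n hn hn'
    simp only [Finset.mem_Icc] at hn
    rw [hsq n hn.1, zero_div]
    rintro ⟨m, rfl⟩
    refine hn' ⟨m, ?_, by simp [sq]⟩
    simp only [coe_Ioc, Set.mem_Ioc]
    refine ⟨Nat.pos_of_ne_zero ?_, (hle m).2 (by rw [sq]; exact hn.2)⟩
    rintro rfl
    simp at hn
  · intro m _
    push_cast
    rw [Real.sqrt_sq (by positivity)]

end BrAux

/-- Let `B_r` be a non-negative multiplicative function supported on squares with
`B_r(p) = 0`, `B_r(p²) = r(r-1)/2`, and `B_r(p^a)` bounded polynomially in `a`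
uniformly in `p`.  Then `∑_{n ≤ z} B_r(n)/√n ∼ C_r (log z)^{r(r-1)/2}` as `z → ∞`,
for some constant `C_r > 0`. -/
theorem B_r_partial_sum_asymptotic
    (r : ℕ) (hr : 1 ≤ r) (B : ℕ → ℝ)
    (hnn : ∀ n, 0 ≤ B n)
    (hB1 : B 1 = 1)
    (hmult : ∀ a b : ℕ, Nat.Coprime a b → B (a * b) = B a * B b)
    (hBp : ∀ p : ℕ, p.Prime → B p = 0)
    (hBp2 : ∀ p : ℕ, p.Prime → B (p ^ 2) = ((r * (r - 1) / 2 : ℕ) : ℝ))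
    (hpoly : ∃ A : ℝ, ∃ D : ℕ, 0 < A ∧
      ∀ p a : ℕ, p.Prime → B (p ^ a) ≤ A * ((a : ℝ) + 1) ^ D)
    (hsq : ∀ n : ℕ, 0 < n → ¬ IsSquare n → B n = 0) :
    ∃ C : ℝ, 0 < C ∧
      Tendsto (fun z : ℝ =>
          (∑ n ∈ Finset.Icc 1 ⌊z⌋₊, B n / Real.sqrt n) /
            Real.log z ^ (r * (r - 1) / 2)) atTop (nhds C) := by
  
  set k := r * (r - 1) / 2 with hk
  let g : ArithmeticFunction ℝ := ⟨fun n => if n = 0 then 0 else B (n ^ 2), by simp⟩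
  have hgv : ∀ n : ℕ, n ≠ 0 → g n = B (n ^ 2) := fun n hn => if_neg hn
  have hg0 : g 0 = 0 := g.map_zero
  have hg : g.IsMultiplicative := by
    refine ⟨by rw [hgv 1 one_ne_zero]; simpa using hB1, ?_⟩
    intro m n h
    rcases eq_or_ne m 0 with rfl | hm
    · simp
    rcases eq_or_ne n 0 with rfl | hn
    · simp
    rw [hgv _ (mul_ne_zero hm hn), hgv m hm, hgv n hn, mul_pow]
    exact hmult _ _ (h.pow 2 2)
  have hgn : ∀ n, 0 ≤ g n := by
    intro n
    rcases eq_or_ne n 0 with rfl | hn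
    · rw [hg0]
    · rw [hgv n hn]; exact hnn _
  have hgp : ∀ p : ℕ, p.Prime → g p = k := fun p pp => by
    rw [hgv p pp.ne_zero, hBp2 p pp]
  have hgb : BrAux.PB g := by
    obtain ⟨A, D, hA, hAD⟩ := hpoly
    refine ⟨A * 2 ^ D, D, by positivity, fun p a pp => ?_⟩
    rw [abs_of_nonneg (hgn _), hgv _ (pow_ne_zero _ pp.ne_zero), ← pow_mul, mul_assoc, ← mul_pow]
    refine (hAD p (a * 2) pp).trans ?_
    have : (((a * 2 : ℕ) : ℝ) + 1) ≤ 2 * ((a:ℝ) + 1) := by push_cast; linarith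
    gcongr
  obtain ⟨C, hC0, hC⟩ := BrAux.main k g hg hgp hgb hgn
  refine ⟨C * (1/2) ^ k, by positivity, ?_⟩
  have hfl : Tendsto (fun z : ℝ => ⌊Real.sqrt z⌋₊) atTop atTop :=
    tendsto_nat_floor_atTop.comp Real.tendsto_sqrt_atTop
  refine ((hC.comp hfl).mul (BrAux.log_floor_ratio.pow k)).congr' ?_
  filter_upwards [eventually_ge_atTop 4] with z hz
  have h2s : (2:ℝ) ≤ Real.sqrt z := Real.le_sqrt_of_sq_le (by linarith)
  have hf2 : 2 ≤ ⌊Real.sqrt z⌋₊ := Nat.le_floor (by exact_mod_cast h2s)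
  have hl : 0 < Real.log (⌊Real.sqrt z⌋₊ : ℝ) := Real.log_pos (by exact_mod_cast hf2)
  have hS : BrAux.S g ⌊Real.sqrt z⌋₊ = ∑ n ∈ Finset.Icc 1 ⌊z⌋₊, B n / Real.sqrt n := by
    rw [BrAux.sum_squares hsq z (by linarith)]
    refine Finset.sum_congr rfl fun m hm => ?_
    rw [hgv m (Finset.mem_Ioc.1 hm).1.ne']
  simp only [Function.comp]
  rw [hS, div_pow]
  field_simp
end

section
/- If f: N → R≥0 is a non-negative multiplicative function whose Dirichlet series Σ f(n) n^{-s} equals ζ(s)^κ G(s) with κ = k(k+1)/2 > 0 and G a Dirichlet series absolutely convergent in Re(s) > 1 - δ for some δ > 0, with G(1) > 0, then Σ_{m ≤ z, m odd} (d_k(m²)/m) Π_{p | 2m} p/(p+1) ∼ C(k) (log z)^{k(k+1)/2} for a positive constant C(k), where d_k is the k-fold divisor function. -/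
open Filter

/-- `d_k(n)`: the number of ways to write `n` as an ordered product of `k` positive
integers. -/
noncomputable def dfold (k n : ℕ) : ℕ :=
  ((Fintype.piFinset fun _ : Fin k => Finset.Icc 1 n).filter
    fun v => ∏ i, v i = n).card

noncomputable def sdZ : ArithmeticFunction ℝ :=
  ((ArithmeticFunction.zeta : ArithmeticFunction ℕ) : ArithmeticFunction ℝ)

lemma sdZ_apply {n : ℕ} (hn : n ≠ 0) : sdZ n = 1 := by
  simp [sdZ, ArithmeticFunction.natCoe_apply, hn]

lemma sdZ_mult : sdZ.IsMultiplicative := ArithmeticFunction.isMultiplicative_zeta.natCast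


lemma sd_conv_prime_pow (a b : ArithmeticFunction ℝ) {p : ℕ} (hp : p.Prime) (j : ℕ) :
    (a * b) (p ^ j) = ∑ x ∈ Finset.HasAntidiagonal.antidiagonal j, a (p ^ x.1) * b (p ^ x.2) := by
  rw [ArithmeticFunction.mul_apply, Nat.sum_divisorsAntidiagonal (fun x y => a x * b y),
    Nat.sum_divisors_prime_pow hp,
    Finset.Nat.sum_antidiagonal_eq_sum_range_succ (fun x y => a (p ^ x) * b (p ^ y))]
  refine Finset.sum_congr rfl fun i hi => ?_
  rw [Nat.pow_div (by simpa [Nat.lt_succ_iff] using hi) hp.pos]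

lemma sd_mem (k n : ℕ) (hn : n ≠ 0) (v : Fin k → ℕ) :
    v ∈ ((Fintype.piFinset fun _ : Fin k => Finset.Icc 1 n).filter
    fun v => ∏ i, v i = n) ↔ ∏ i, v i = n := by
  simp only [Finset.mem_filter, Fintype.mem_piFinset, Finset.mem_Icc, and_iff_right_iff_imp]
  rintro h i
  have hd : v i ∣ n := h ▸ Finset.dvd_prod_of_mem v (Finset.mem_univ i)
  exact ⟨Nat.pos_of_dvd_of_pos hd (Nat.pos_of_ne_zero hn), Nat.le_of_dvd (Nat.pos_of_ne_zero hn) hd⟩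

lemma sd_dfold_succ (k n : ℕ) (hn : n ≠ 0) :
    dfold (k+1) n = ∑ x ∈ n.divisorsAntidiagonal, dfold k x.2 := by
  unfold dfold
  rw [← Finset.card_sigma]
  refine Finset.card_bij' (fun v _ => ⟨(v 0, ∏ i, Fin.tail v i), Fin.tail v⟩)
    (fun x _ => Fin.cons x.1.1 x.2) ?_ ?_ ?_ ?_
  · intro v hv
    rw [sd_mem _ _ hn] at hv
    have h2 : v 0 * ∏ i, Fin.tail v i = n := by
      rw [← hv, Fin.prod_univ_succ]; rfl
    rw [Finset.mem_sigma]
    refine ⟨by simp [h2, hn], ?_⟩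
    rw [sd_mem]
    intro h0
    simp only at h0
    rw [h0] at h2; simp at h2; exact hn h2.symm
  · rintro ⟨⟨x, y⟩, w⟩ h
    rw [Finset.mem_sigma] at h
    obtain ⟨h1, h2⟩ := h
    simp only [Nat.mem_divisorsAntidiagonal] at h1
    rw [sd_mem _ _ (by rintro rfl; simp at h1; omega)] at h2
    rw [sd_mem _ _ hn, Fin.prod_univ_succ]
    simp only [Fin.cons_zero, Fin.cons_succ]
    simp only at h2
    rw [h2, h1.1]
  · intro v hv
    simp
  · rintro ⟨⟨x, y⟩, w⟩ h
    rw [Finset.mem_sigma] at h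
    obtain ⟨h1, h2⟩ := h
    simp only [Nat.mem_divisorsAntidiagonal] at h1
    rw [sd_mem _ _ (by rintro rfl; simp at h1; omega)] at h2
    simp only at h2
    simp [h2]


lemma sd_dfold_eq (k : ℕ) : ∀ n : ℕ, n ≠ 0 →
    (dfold k n : ℝ) = (sdZ ^ k) n := by
  induction k with
  | zero =>
    intro n hn
    by_cases h : n = 1
    · subst h; simp [dfold]
    · simp [dfold, h, Ne.symm h]
  | succ k ih =>
    intro n hn
    rw [sd_dfold_succ k n hn, pow_succ', ArithmeticFunction.mul_apply]
    rw [Nat.cast_sum]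
    refine Finset.sum_congr rfl fun x hx => ?_
    have h1 := Nat.left_ne_zero_of_mem_divisorsAntidiagonal hx
    have h2 := Nat.right_ne_zero_of_mem_divisorsAntidiagonal hx
    rw [ih _ h2]
    rw [sdZ_apply h1, one_mul]


lemma sd_pow_bound (a : ArithmeticFunction ℝ) {p : ℕ} (hp : p.Prime)
    (ha : ∀ j, |a (p ^ j)| ≤ 1) (k : ℕ) : ∀ j : ℕ, |(a ^ k) (p ^ j)| ≤ ((j : ℝ) + 1) ^ k := by
  induction k with
  | zero =>
    intro j
    rw [pow_zero, pow_zero, ArithmeticFunction.one_apply]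
    split_ifs <;> simp
  | succ k ih =>
    intro j
    rw [pow_succ', sd_conv_prime_pow _ _ hp]
    calc _ ≤ ∑ x ∈ Finset.HasAntidiagonal.antidiagonal j, |a (p ^ x.1) * (a ^ k) (p ^ x.2)| :=
          Finset.abs_sum_le_sum_abs _ _
      _ ≤ ∑ x ∈ Finset.HasAntidiagonal.antidiagonal j, ((j : ℝ) + 1) ^ k := by
          refine Finset.sum_le_sum fun x hx => ?_
          rw [abs_mul]
          have h1 := ha x.1
          have h2 := ih x.2
          have h3 : (x.2 : ℝ) ≤ j := by
            have := Finset.HasAntidiagonal.mem_antidiagonal.1 hx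
            exact_mod_cast (by omega : x.2 ≤ j)
          calc _ ≤ 1 * ((x.2 : ℝ) + 1) ^ k := mul_le_mul h1 h2 (abs_nonneg _) zero_le_one
            _ ≤ _ := by rw [one_mul]; gcongr
      _ = _ := by
          rw [Finset.sum_const, Finset.Nat.card_antidiagonal, nsmul_eq_mul, pow_succ']
          push_cast; ring


lemma sd_zeta_pow_prime {p : ℕ} (hp : p.Prime) (k : ℕ) :
    (sdZ ^ k) p = k ∧
    (sdZ ^ k) (p ^ 2) = k * (k + 1) / 2 := by
  have hz : ∀ j, sdZ (p ^ j) = 1 := by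
    intro j
    exact sdZ_apply (pow_ne_zero _ hp.ne_zero)
  have hone : ∀ k, (sdZ ^ k) 1 = 1 := fun k =>
    (sdZ_mult.pow (k := k)).1
  have key : ∀ k : ℕ, (sdZ ^ k) (p ^ 1) = k ∧
    (sdZ ^ k) (p ^ 2) = k * (k + 1) / 2 := by
    intro k
    induction k with
    | zero =>
      simp [hp.one_lt.ne']
    | succ k ih =>
      rw [pow_succ', sd_conv_prime_pow _ _ hp, sd_conv_prime_pow _ _ hp]
      have e1 : Finset.HasAntidiagonal.antidiagonal 1 = {(0,1),(1,0)} := rfl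
      have e2 : Finset.HasAntidiagonal.antidiagonal 2 = {(0,2),(1,1),(2,0)} := rfl
      rw [e1, e2]
      simp only [hz, one_mul]
      have h0 := hone k
      obtain ⟨h1, h2⟩ := ih
      rw [Finset.sum_insert (by simp), Finset.sum_singleton, Finset.sum_insert (by simp),
        Finset.sum_insert (by simp), Finset.sum_singleton]
      simp only [pow_zero, h0, h1, h2]
      push_cast
      constructor <;> ring
  simpa using key k

noncomputable def sdM : ArithmeticFunction ℝ :=
  ((ArithmeticFunction.moebius : ArithmeticFunction ℤ) : ArithmeticFunction ℝ)

lemma sdM_mult : sdM.IsMultiplicative := ArithmeticFunction.isMultiplicative_moebius.intCast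

lemma sdM_mul_sdZ : sdM * sdZ = 1 := ArithmeticFunction.coe_moebius_mul_coe_zeta

lemma sdM_abs_le (n : ℕ) : |sdM n| ≤ 1 := by
  have := ArithmeticFunction.abs_moebius_le_one (n := n)
  simp only [sdM, ArithmeticFunction.intCoe_apply]
  exact_mod_cast this

noncomputable def sdf (k : ℕ) : ArithmeticFunction ℝ :=
  ⟨fun m => if Odd m then (sdZ ^ k) (m ^ 2) * ∏ p ∈ m.primeFactors, (p : ℝ) / (p + 1) else 0,
    by simp⟩

lemma sdf_apply (k m : ℕ) : sdf k m =
    if Odd m then (sdZ ^ k) (m ^ 2) * ∏ p ∈ m.primeFactors, (p : ℝ) / (p + 1) else 0 := rfl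

lemma sdZ_pow_one (k : ℕ) : (sdZ ^ k) 1 = 1 := (sdZ_mult.pow (k := k)).1

lemma sdf_mult (k : ℕ) : (sdf k).IsMultiplicative := by
  refine ⟨by simp [sdf_apply, sdZ_pow_one], ?_⟩
  intro m n hmn
  simp only [sdf_apply, Nat.odd_mul]
  by_cases hm : Odd m
  · by_cases hn : Odd n
    · simp only [hm, hn, and_self, if_true]
      rw [hmn.primeFactors_mul, Finset.prod_union hmn.disjoint_primeFactors, mul_pow,
        (sdZ_mult.pow (k := k)).2 (Nat.Coprime.pow 2 2 hmn)]
      ring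
    · simp [hn]
  · simp [hm]

lemma sdZ_pow_nonneg (k n : ℕ) : 0 ≤ (sdZ ^ k) n := by
  rcases eq_or_ne n 0 with rfl | hn
  · simp
  · rw [← sd_dfold_eq k n hn]; positivity

lemma sdf_nonneg (k m : ℕ) : 0 ≤ sdf k m := by
  rw [sdf_apply]
  split_ifs
  · exact mul_nonneg (sdZ_pow_nonneg _ _) (Finset.prod_nonneg fun p _ => by positivity)
  · exact le_rfl

lemma sdf_prime_pow_le (k : ℕ) {p : ℕ} (hp : p.Prime) (j : ℕ) :
    |sdf k (p ^ j)| ≤ (2 * (j : ℝ) + 1) ^ k := by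
  rw [abs_of_nonneg (sdf_nonneg _ _), sdf_apply]
  split_ifs
  · have h1 := sd_pow_bound sdZ hp (fun j => by
      rw [sdZ_apply (pow_ne_zero _ hp.ne_zero)]; simp) k (j * 2)
    rw [pow_mul] at h1
    have h2 : ∏ p ∈ (p ^ j).primeFactors, (p : ℝ) / (p + 1) ≤ 1 := by
      refine Finset.prod_le_one (fun p _ => by positivity) fun p _ => ?_
      rw [div_le_one (by positivity)]; linarith
    calc _ ≤ (sdZ ^ k) ((p ^ j) ^ 2) * 1 :=
          mul_le_mul_of_nonneg_left h2 (sdZ_pow_nonneg _ _)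
      _ ≤ _ := by
          rw [mul_one]
          refine (le_abs_self _).trans (h1.trans_eq ?_)
          push_cast; ring
  · positivity

lemma sdf_prime (k : ℕ) (κ : ℕ) (hκ : 2 * κ = k * (k + 1)) {p : ℕ} (hp : p.Prime) :
    |sdf k p - κ| ≤ 2 * κ / p := by
  have hp0 : (0 : ℝ) < p := by exact_mod_cast hp.pos
  have hκ' : (κ : ℝ) = k * (k + 1) / 2 := by
    have : (2 : ℝ) * κ = k * (k + 1) := by exact_mod_cast hκ
    linarith
  rw [sdf_apply]
  split_ifs with ho
  · rw [(sd_zeta_pow_prime hp k).2, ← hκ', hp.primeFactors, Finset.prod_singleton]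
    have : (κ : ℝ) * (p / (p + 1)) - κ = - (κ / (p + 1)) := by field_simp; ring
    rw [this, abs_neg, abs_of_nonneg (by positivity)]
    apply div_le_div₀ (by positivity) _ hp0 (by linarith)
    have : (0 : ℝ) ≤ κ := by positivity
    linarith
  · have : p = 2 := by
      by_contra h
      exact ho (hp.odd_of_ne_two h)
    subst this
    simp

noncomputable def sdw (a : ArithmeticFunction ℝ) : ArithmeticFunction ℝ :=
  ⟨fun n => a n / n, by simp⟩

lemma sdw_apply (a : ArithmeticFunction ℝ) (n : ℕ) : sdw a n = a n / n := rfl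

lemma sdw_mul (a b : ArithmeticFunction ℝ) : sdw (a * b) = sdw a * sdw b := by
  ext n
  rw [sdw_apply, ArithmeticFunction.mul_apply, ArithmeticFunction.mul_apply, Finset.sum_div]
  refine Finset.sum_congr rfl fun x hx => ?_
  rw [sdw_apply, sdw_apply, ← (Nat.mem_divisorsAntidiagonal.1 hx).1]
  push_cast
  rw [div_mul_div_comm]

lemma sdw_mult {a : ArithmeticFunction ℝ} (ha : a.IsMultiplicative) : (sdw a).IsMultiplicative := by
  refine ⟨by simp [sdw_apply, ha.1], ?_⟩
  intro m n h
  simp only [sdw_apply, ha.2 h]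
  push_cast
  rw [div_mul_div_comm]

noncomputable def sdh (k κ : ℕ) : ArithmeticFunction ℝ := sdf k * sdM ^ κ

lemma sdh_mult (k κ : ℕ) : (sdh k κ).IsMultiplicative := (sdf_mult k).mul (sdM_mult.pow)

lemma sdh_mul (k κ : ℕ) : sdh k κ * sdZ ^ κ = sdf k := by
  rw [sdh, mul_assoc, ← mul_pow, sdM_mul_sdZ, one_pow, mul_one]

lemma sdh_bound (k κ : ℕ) {p : ℕ} (hp : p.Prime) (j : ℕ) :
    |sdh k κ (p ^ j)| ≤ (2 * (j : ℝ) + 2) ^ (k + κ + 1) := by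
  rw [sdh, sd_conv_prime_pow _ _ hp]
  calc _ ≤ ∑ x ∈ Finset.HasAntidiagonal.antidiagonal j, |sdf k (p ^ x.1) * (sdM ^ κ) (p ^ x.2)| :=
          Finset.abs_sum_le_sum_abs _ _
    _ ≤ ∑ x ∈ Finset.HasAntidiagonal.antidiagonal j, (2 * (j : ℝ) + 2) ^ (k + κ) := by
        refine Finset.sum_le_sum fun x hx => ?_
        rw [abs_mul, pow_add]
        have h1 := sdf_prime_pow_le k hp x.1
        have h2 := sd_pow_bound sdM hp (fun j => sdM_abs_le _) κ x.2
        have := Finset.HasAntidiagonal.mem_antidiagonal.1 hx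
        have h3 : (x.2 : ℝ) ≤ j := by exact_mod_cast (by omega : x.2 ≤ j)
        have h4 : (x.1 : ℝ) ≤ j := by exact_mod_cast (by omega : x.1 ≤ j)
        have h5 : (0 : ℝ) ≤ x.1 := by positivity
        have h6 : (0 : ℝ) ≤ x.2 := by positivity
        refine mul_le_mul (h1.trans ?_) (h2.trans ?_) (abs_nonneg _) (by positivity)
        · exact pow_le_pow_left₀ (by positivity) (by linarith) _
        · exact pow_le_pow_left₀ (by positivity) (by linarith) _
    _ ≤ _ := by
        rw [Finset.sum_const, Finset.Nat.card_antidiagonal, nsmul_eq_mul, pow_succ']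
        push_cast
        have : (0 : ℝ) ≤ j := by positivity
        exact mul_le_mul_of_nonneg_right (by linarith) (by positivity)

lemma sdh_prime (k : ℕ) (κ : ℕ) (hκ : 2 * κ = k * (k + 1)) {p : ℕ} (hp : p.Prime) :
    |sdh k κ p| ≤ 2 * κ / p := by
  have h := congrArg (fun a => a (p ^ 1)) (sdh_mul k κ)
  rw [sd_conv_prime_pow _ _ hp] at h
  have e1 : Finset.HasAntidiagonal.antidiagonal 1 = {(0,1),(1,0)} := rfl
  rw [e1, Finset.sum_insert (by simp), Finset.sum_singleton] at h
  simp only [pow_zero, pow_one, (sdh_mult k κ).1, sdZ_pow_one, (sd_zeta_pow_prime hp κ).1] at h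
  have : sdh k κ p = sdf k p - κ := by linarith
  rw [this]
  exact sdf_prime k κ hκ hp

noncomputable def sdc (k κ j : ℕ) : ℝ := (2 * κ + 4) * (2 * (j : ℝ) + 2) ^ (k + κ + 1) / 2 ^ j

lemma sdc_nonneg (k κ j : ℕ) : 0 ≤ sdc k κ j := by unfold sdc; positivity

lemma sdc_summable (k κ : ℕ) : Summable (sdc k κ) := by
  have h := summable_pow_mul_geometric_of_norm_lt_one (R := ℝ) (k + κ + 1) (r := 1/2) (by norm_num)
  have h2 := (summable_nat_add_iff 1).2 h
  refine (h2.mul_left ((2 * (κ : ℝ) + 4) * 2 ^ (k + κ + 1) * 2)).congr fun j => ?_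
  unfold sdc
  have : (2 * (j : ℝ) + 2) = 2 * ((j : ℝ) + 1) := by ring
  rw [this, mul_pow]
  push_cast
  rw [pow_succ (1/2 : ℝ), one_div, inv_pow]
  field_simp

lemma sdw_pow_bound (k : ℕ) (κ : ℕ) (hκ : 2 * κ = k * (k + 1)) {p : ℕ} (hp : p.Prime) (j : ℕ) :
    |sdw (sdh k κ) (p ^ (j + 1))| ≤ sdc k κ (j + 1) / p ^ 2 := by
  have hp0 : (0 : ℝ) < p := by exact_mod_cast hp.pos
  have hp2 : (2 : ℝ) ≤ p := by exact_mod_cast hp.two_le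
  have hk0 : (0 : ℝ) ≤ κ := by positivity
  rw [sdw_apply, abs_div, abs_of_nonneg (by positivity : (0 : ℝ) ≤ ((p ^ (j + 1) : ℕ) : ℝ))]
  rcases Nat.eq_zero_or_pos j with rfl | hj
  · have h := sdh_prime k κ hκ hp
    simp only [zero_add, pow_one]
    calc |sdh k κ p| / p ≤ (2 * κ / p) / p := by gcongr
      _ = 2 * κ / p ^ 2 := by rw [div_div, sq]
      _ ≤ _ := by
        gcongr
        unfold sdc
        have : (2:ℝ) ≤ (2 * ((1:ℕ) : ℝ) + 2) ^ (k + κ + 1) := by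
          calc (2:ℝ) ≤ (2 * ((1:ℕ) : ℝ) + 2) ^ 1 := by norm_num
            _ ≤ _ := pow_le_pow_right₀ (by norm_num) (by omega)
        rw [le_div_iff₀ (by norm_num)]
        nlinarith
  · obtain ⟨i, rfl⟩ : ∃ i, j = i + 1 := ⟨j - 1, by omega⟩
    have h := sdh_bound k κ hp (i + 1 + 1)
    unfold sdc
    set X := (2 * ((i + 1 + 1 : ℕ) : ℝ) + 2) ^ (k + κ + 1)
    have hX : 0 ≤ X := by positivity
    have h3 : (4 : ℝ) / 2 ^ (i + 1 + 1) / p ^ 2 ≥ 1 / ((p ^ (i + 1 + 1) : ℕ) : ℝ) := by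
      push_cast
      have e1 : (4 : ℝ) / 2 ^ (i + 1 + 1) = 1 / 2 ^ i := by rw [pow_succ, pow_succ]; field_simp; norm_num
      have e2 : (p : ℝ) ^ (i + 1 + 1) = p ^ i * p ^ 2 := by ring
      rw [e1, div_div, e2]
      have : (2 : ℝ) ^ i ≤ p ^ i := pow_le_pow_left₀ (by norm_num) hp2 _
      refine one_div_le_one_div_of_le (by positivity) ?_
      exact mul_le_mul_of_nonneg_right this (by positivity)
    calc _ ≤ X / ((p ^ (i + 1 + 1) : ℕ) : ℝ) := by gcongr
      _ = X * (1 / ((p ^ (i + 1 + 1) : ℕ) : ℝ)) := by ring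
      _ ≤ X * ((4 : ℝ) / 2 ^ (i + 1 + 1) / p ^ 2) := by gcongr
      _ = 4 * X / 2 ^ (i + 1 + 1) / p ^ 2 := by ring
      _ ≤ _ := by gcongr; linarith

noncomputable def sdK (k κ : ℕ) : ℝ := ∑' j, sdc k κ (j + 1)

lemma sdK_nonneg (k κ : ℕ) : 0 ≤ sdK k κ := tsum_nonneg fun _ => sdc_nonneg _ _ _

lemma sdw_summable_succ (k : ℕ) (κ : ℕ) (hκ : 2 * κ = k * (k + 1)) {p : ℕ} (hp : p.Prime) :
    Summable (fun j => |sdw (sdh k κ) (p ^ (j + 1))|) :=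
  Summable.of_nonneg_of_le (fun _ => abs_nonneg _) (fun j => sdw_pow_bound k κ hκ hp j)
    (((summable_nat_add_iff 1).2 (sdc_summable k κ)).div_const _)

lemma sdw_tsum_succ_le (k : ℕ) (κ : ℕ) (hκ : 2 * κ = k * (k + 1)) {p : ℕ} (hp : p.Prime) :
    ∑' j, |sdw (sdh k κ) (p ^ (j + 1))| ≤ sdK k κ / p ^ 2 := by
  rw [sdK, ← tsum_div_const]
  exact Summable.tsum_le_tsum (fun j => sdw_pow_bound k κ hκ hp j) (sdw_summable_succ k κ hκ hp)
    (((summable_nat_add_iff 1).2 (sdc_summable k κ)).div_const _)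

lemma sdw_summable (k : ℕ) (κ : ℕ) (hκ : 2 * κ = k * (k + 1)) :
    Summable (fun n => ‖sdw (sdh k κ) n‖) := by
  set F : ℕ → ℝ := fun n => ‖sdw (sdh k κ) n‖ with hF
  have hm := sdw_mult (sdh_mult k κ)
  have hpp : ∀ {p : ℕ}, p.Prime → Summable (fun n : ℕ ↦ ‖F (p ^ n)‖) := by
    intro p hp
    have := (summable_nat_add_iff (f := fun n : ℕ ↦ ‖F (p ^ n)‖) 1).1
    apply this
    simpa [hF] using sdw_summable_succ k κ hκ hp
  have hz : Summable (fun n : ℕ => sdK k κ / (n : ℝ) ^ 2) := by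
    have := (Real.summable_one_div_nat_pow (p := 2)).2 (by norm_num)
    refine (this.mul_left (sdK k κ)).congr fun n => by ring
  refine summable_of_sum_range_le (c := Real.exp (∑' n : ℕ, sdK k κ / (n : ℝ) ^ 2))
    (fun n => norm_nonneg _) fun N => ?_
  have key := EulerProduct.summable_and_hasSum_smoothNumbers_prod_primesBelow_tsum (f := F)
    (by simp [hF, hm.1]) (fun {m n} h => by simp only [hF]; rw [hm.2 h, norm_mul]) hpp N
  have hle : ∑ n ∈ Finset.range N, F n ≤ ∏ p ∈ N.primesBelow, ∑' n : ℕ, F (p ^ n) := by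
    rw [← key.2.tsum_eq]
    rw [tsum_subtype (N.smoothNumbers) F]
    have h1 : ∑ n ∈ Finset.range N, F n = ∑ n ∈ Finset.range N, (N.smoothNumbers).indicator F n := by
      refine Finset.sum_congr rfl fun n hn => ?_
      rcases Nat.eq_zero_or_pos n with rfl | h0
      · have : F 0 = 0 := by simp [hF]
        simp [Set.indicator, this]
      · rw [Set.indicator_of_mem]
        exact Nat.mem_smoothNumbers_of_lt h0 (Finset.mem_range.1 hn)
    rw [h1]
    refine Summable.sum_le_tsum _ (fun n _ => Set.indicator_nonneg (fun _ _ => norm_nonneg _) _) ?_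
    rw [← summable_subtype_iff_indicator]
    exact key.2.summable
  refine hle.trans ?_
  calc ∏ p ∈ N.primesBelow, ∑' n : ℕ, F (p ^ n)
      ≤ ∏ p ∈ N.primesBelow, Real.exp (sdK k κ / (p : ℝ) ^ 2) := by
        refine Finset.prod_le_prod (fun p _ => tsum_nonneg fun _ => norm_nonneg _) fun p hp => ?_
        have hp := Nat.prime_of_mem_primesBelow hp
        rw [(hpp hp).of_norm.tsum_eq_zero_add]
        have h1 := sdw_tsum_succ_le k κ hκ hp
        have h2 : F (p ^ 0) = 1 := by simp [hF, hm.1]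
        rw [h2]
        have h3 := Real.add_one_le_exp (sdK k κ / (p : ℝ) ^ 2)
        simp only [hF, Real.norm_eq_abs]
        linarith
    _ = Real.exp (∑ p ∈ N.primesBelow, sdK k κ / (p : ℝ) ^ 2) := (Real.exp_sum _ _).symm
    _ ≤ _ := by
        apply Real.exp_le_exp.2
        refine hz.sum_le_tsum _ fun p _ => ?_
        have := sdK_nonneg k κ
        positivity

lemma sdw_local_ne (k : ℕ) (κ : ℕ) (hκ : 2 * κ = k * (k + 1)) {p : ℕ} (hp : p.Prime) :
    ∑' j, sdw (sdh k κ) (p ^ j) ≠ 0 := by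
  intro h0
  have hinj := Nat.pow_right_injective hp.two_le
  have hs1 : Summable (fun j => ‖sdw (sdh k κ) (p ^ j)‖) :=
    (sdw_summable k κ hκ).comp_injective hinj
  have hs2 : Summable (fun j => ‖sdw (sdZ ^ κ) (p ^ j)‖) := by
    refine Summable.of_nonneg_of_le (fun _ => norm_nonneg _) (fun j => ?_) (sdc_summable k κ)
    have hp2 : (2 : ℝ) ≤ p := by exact_mod_cast hp.two_le
    rw [Real.norm_eq_abs, sdw_apply, abs_div,
      abs_of_nonneg (by positivity : (0 : ℝ) ≤ ((p ^ j : ℕ) : ℝ)), sdc]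
    have h1 := sd_pow_bound sdZ hp (fun j => by
      rw [sdZ_apply (pow_ne_zero _ hp.ne_zero)]; simp) κ j
    have h2 : (2:ℝ) ^ j ≤ ((p ^ j : ℕ) : ℝ) := by
      push_cast; exact pow_le_pow_left₀ (by norm_num) hp2 _
    have hj : (0 : ℝ) ≤ j := by positivity
    have hk0 : (0 : ℝ) ≤ κ := by positivity
    refine div_le_div₀ (by positivity) (h1.trans ?_) (by positivity) h2
    calc ((j : ℝ) + 1) ^ κ ≤ (2 * (j : ℝ) + 2) ^ κ :=
          pow_le_pow_left₀ (by positivity) (by linarith) _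
      _ ≤ (2 * (j : ℝ) + 2) ^ (k + κ + 1) := pow_le_pow_right₀ (by linarith) (by omega)
      _ ≤ _ := le_mul_of_one_le_left (by positivity) (by linarith)
  have hprod := tsum_mul_tsum_eq_tsum_sum_antidiagonal_of_summable_norm hs1 hs2
  rw [h0, zero_mul] at hprod
  have hsum := (summable_norm_sum_mul_antidiagonal_of_summable_norm hs1 hs2).of_norm
  have hval : ∀ j, ∑ x ∈ Finset.HasAntidiagonal.antidiagonal j,
      sdw (sdh k κ) (p ^ x.1) * sdw (sdZ ^ κ) (p ^ x.2) = sdw (sdf k) (p ^ j) := by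
    intro j
    rw [← sd_conv_prime_pow _ _ hp, ← sdw_mul, sdh_mul]
  simp_rw [hval] at hprod hsum
  have h1 := hsum.le_tsum 0 (fun j _ => div_nonneg (sdf_nonneg _ _) (by positivity))
  rw [← hprod] at h1
  simp [sdw_apply, (sdf_mult k).1] at h1
  linarith

lemma sdw_tsum_ne (k : ℕ) (κ : ℕ) (hκ : 2 * κ = k * (k + 1)) :
    ∑' n, sdw (sdh k κ) n ≠ 0 := by
  have hm := sdw_mult (sdh_mult k κ)
  have hs := sdw_summable k κ hκ
  have hP := (hm.eulerProduct_hasProd hs).tprod_eq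
  rw [← hP]
  have hloc : ∀ p : Nat.Primes, ∑' e, sdw (sdh k κ) ((p : ℕ) ^ e) =
      1 + ∑' e, sdw (sdh k κ) ((p : ℕ) ^ (e + 1)) := by
    intro p
    have : Summable (fun j => sdw (sdh k κ) ((p : ℕ) ^ j)) :=
      (hs.comp_injective (Nat.pow_right_injective p.2.two_le)).of_norm
    rw [this.tsum_eq_zero_add, pow_zero, hm.1]
  simp_rw [hloc]
  refine tprod_one_add_ne_zero_of_summable (fun p => ?_) ?_
  · rw [← hloc]; exact sdw_local_ne k κ hκ p.2
  · have hz : Summable (fun n : ℕ => sdK k κ / (n : ℝ) ^ 2) := by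
      have := (Real.summable_one_div_nat_pow (p := 2)).2 (by norm_num)
      refine (this.mul_left (sdK k κ)).congr fun n => by ring
    refine Summable.of_nonneg_of_le (fun _ => norm_nonneg _) (fun p => ?_)
      (hz.comp_injective Subtype.val_injective : Summable (fun p : Nat.Primes => sdK k κ / ((p : ℕ) : ℝ) ^ 2))
    refine (norm_tsum_le_tsum_norm ?_).trans ?_
    · simpa using sdw_summable_succ k κ hκ p.2
    · exact sdw_tsum_succ_le k κ hκ p.2

lemma sd_pow_diff (n : ℕ) {a b : ℝ} (ha : 0 ≤ a) (hab : a ≤ b) :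
    ((n : ℝ) + 1) * (b - a) * a ^ n ≤ b ^ (n + 1) - a ^ (n + 1) ∧
    b ^ (n + 1) - a ^ (n + 1) ≤ ((n : ℝ) + 1) * (b - a) * b ^ n := by
  induction n with
  | zero => simp
  | succ n ih =>
    obtain ⟨h1, h2⟩ := ih
    have hb : 0 ≤ b := ha.trans hab
    have e : b ^ (n + 1 + 1) - a ^ (n + 1 + 1) =
      b * (b ^ (n + 1) - a ^ (n + 1)) + (b - a) * a ^ (n + 1) := by ring
    have hd : 0 ≤ b - a := by linarith
    have hpow : a ^ (n + 1) ≤ b ^ (n + 1) := pow_le_pow_left₀ ha hab _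
    rw [e]
    push_cast
    constructor
    · have h3 : a * (((n : ℝ) + 1) * (b - a) * a ^ n) ≤ b * (b ^ (n + 1) - a ^ (n + 1)) :=
        mul_le_mul hab h1 (by positivity) hb
      have : a * (((n : ℝ) + 1) * (b - a) * a ^ n) = ((n : ℝ) + 1) * (b - a) * a ^ (n + 1) := by ring
      linarith
    · have h3 := mul_le_mul_of_nonneg_left h2 hb
      have h4 := mul_le_mul_of_nonneg_left hpow hd
      have : b * (((n : ℝ) + 1) * (b - a) * b ^ n) = ((n : ℝ) + 1) * (b - a) * b ^ (n + 1) := by ring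
      linarith

lemma sd_upper (κ : ℕ) (c x : ℝ) (hc : 0 ≤ c) (N : ℕ) (hN : 1 ≤ N) : (N : ℝ) ≤ x →
    ∑ n ∈ Finset.Ioc 0 N, 1 / (n : ℝ) * (c + Real.log (x / n)) ^ κ ≤
      (c + Real.log x) ^ κ +
        ((c + Real.log x) ^ (κ + 1) - (c + Real.log (x / N)) ^ (κ + 1)) / (κ + 1) := by
  induction N, hN using Nat.le_induction with
  | base => intro _; simp
  | succ N hN ih =>
    intro hx
    have hN0 : (1 : ℝ) ≤ N := by exact_mod_cast hN
    push_cast at hx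
    have hx0 : 0 < x := by linarith
    rw [Finset.sum_Ioc_succ_top (Nat.zero_le _)]
    have ih := ih (by linarith)
    have ha : 0 ≤ c + Real.log (x / (N + 1)) := by
      have := Real.log_nonneg ((one_le_div (by linarith)).2 hx)
      linarith
    have hlog : 1 / ((N : ℝ) + 1) ≤ (c + Real.log (x / N)) - (c + Real.log (x / (N + 1))) := by
      have h := Real.one_sub_inv_le_log_of_pos (x := ((N : ℝ) + 1) / N) (by positivity)
      rw [Real.log_div (by positivity) (by positivity)] at h
      rw [Real.log_div (by positivity) (by positivity), Real.log_div (by positivity) (by positivity)]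
      have : 1 - (((N : ℝ) + 1) / N)⁻¹ = 1 / ((N : ℝ) + 1) := by field_simp; ring
      linarith
    have hpos : 0 < 1 / ((N : ℝ) + 1) := by positivity
    have hd := (sd_pow_diff κ ha (b := c + Real.log (x / N)) (by linarith)).1
    have hk : (0 : ℝ) < κ + 1 := by positivity
    have h3 : 1 / ((N : ℝ) + 1) * (c + Real.log (x / (N + 1))) ^ κ ≤
        ((c + Real.log (x / N)) ^ (κ + 1) - (c + Real.log (x / (N + 1))) ^ (κ + 1)) / (κ + 1) := by
      rw [le_div_iff₀ hk]
      refine le_trans ?_ hd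
      have := mul_le_mul_of_nonneg_right hlog
        (by positivity : 0 ≤ (c + Real.log (x / (N + 1))) ^ κ * (κ + 1))
      linarith
    push_cast
    refine (add_le_add ih h3).trans_eq ?_
    ring

lemma sd_lower (κ : ℕ) (x : ℝ) (hx1 : 1 ≤ x) (N : ℕ) : (N : ℝ) ≤ x →
    (Real.log x ^ (κ + 1) - (max 0 (Real.log (x / (N + 1)))) ^ (κ + 1)) / (κ + 1) ≤ 
    ∑ n ∈ Finset.Ioc 0 N, 1 / (n : ℝ) * (Real.log (x / n)) ^ κ := by
  induction N with
  | zero => intro _; simp [max_eq_right (Real.log_nonneg hx1)]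
  | succ N ih =>
    intro hx
    have hN0 : (0 : ℝ) ≤ N := by positivity
    push_cast at hx
    have hx0 : 0 < x := by linarith
    rw [Finset.sum_Ioc_succ_top (Nat.zero_le _)]
    have ih := ih (by linarith)
    have hb : 0 ≤ Real.log (x / (N + 1)) := 
      Real.log_nonneg ((one_le_div (by linarith)).2 hx)
    rw [max_eq_right hb] at ih
    push_cast
    set a := max 0 (Real.log (x / (N + 1 + 1))) with hadef
    have hlog0 : Real.log (x / (N + 1)) - Real.log (x / (N + 1 + 1)) ≤ 1 / ((N : ℝ) + 1) ∧
       0 ≤ Real.log (x / (N + 1)) - Real.log (x / (N + 1 + 1)) := by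
      have h := Real.log_le_sub_one_of_pos (x := ((N : ℝ) + 1 + 1) / (N + 1)) (by positivity)
      have h' := Real.log_nonneg (x := ((N : ℝ) + 1 + 1) / (N + 1))
        ((one_le_div (by positivity)).2 (by linarith))
      rw [Real.log_div (by positivity) (by positivity)] at h h'
      rw [Real.log_div (by positivity) (by positivity), Real.log_div (by positivity) (by positivity)]
      have : ((N : ℝ) + 1 + 1) / (N + 1) - 1 = 1 / ((N : ℝ) + 1) := by field_simp; ring
      constructor <;> linarith
    have ha : 0 ≤ a := le_max_left _ _
    have ha2 : Real.log (x / (N + 1 + 1)) ≤ a := le_max_right _ _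
    have hab : a ≤ Real.log (x / (N + 1)) := max_le hb (by linarith [hlog0.2])
    have hd := (sd_pow_diff κ ha hab).2
    have hk : (0 : ℝ) < κ + 1 := by positivity
    have h3 : (Real.log (x / (N + 1)) ^ (κ + 1) - a ^ (κ + 1)) / (κ + 1) ≤
        1 / ((N : ℝ) + 1) * (Real.log (x / (N + 1))) ^ κ := by
      rw [div_le_iff₀ hk]
      refine hd.trans ?_
      have := mul_le_mul_of_nonneg_right 
        (by linarith [hlog0.1] : Real.log (x / (N + 1)) - a ≤ 1 / ((N : ℝ) + 1))
        (by positivity : 0 ≤ (Real.log (x / (N + 1))) ^ κ * (κ + 1))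
      linarith
    refine le_trans (le_of_eq ?_) (add_le_add ih h3)
    ring

noncomputable def sdT (κ : ℕ) (x : ℝ) : ℝ := ∑ m ∈ Finset.Ioc 0 ⌊x⌋₊, sdw (sdZ ^ κ) m

lemma sd_hyper (a : ArithmeticFunction ℝ) (κ : ℕ) (x : ℝ) :
    ∑ m ∈ Finset.Ioc 0 ⌊x⌋₊, sdw (a * sdZ ^ κ) m =
      ∑ n ∈ Finset.Ioc 0 ⌊x⌋₊, sdw a n * sdT κ (x / n) := by
  rw [sdw_mul, ArithmeticFunction.sum_Ioc_mul_eq_sum_sum]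
  refine Finset.sum_congr rfl fun n _ => ?_
  rw [sdT, Nat.floor_div_natCast]

lemma sdT_bounds (κ : ℕ) : ∀ x : ℝ, 1 ≤ x →
    Real.log x ^ κ / κ.factorial ≤ sdT κ x ∧
    sdT κ x ≤ (κ + Real.log x) ^ κ / κ.factorial := by
  induction κ with
  | zero =>
    intro x hx
    have h1 : 1 ≤ ⌊x⌋₊ := Nat.le_floor (by simpa using hx)
    have : sdT 0 x = 1 := by
      unfold sdT
      rw [Finset.sum_eq_single 1]
      · simp [sdw_apply]
      · intro b _ hb
        simp [sdw_apply, ArithmeticFunction.one_apply, hb]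
      · intro h; exact absurd (by simp; omega) h
    simp [this]
  | succ κ ih =>
    intro x hx
    have hx0 : 0 < x := by linarith
    have h1 : 1 ≤ ⌊x⌋₊ := Nat.le_floor (by simpa using hx)
    have hfl : (⌊x⌋₊ : ℝ) ≤ x := Nat.floor_le hx0.le
    have hT : sdT (κ + 1) x = ∑ n ∈ Finset.Ioc 0 ⌊x⌋₊, 1 / (n : ℝ) * sdT κ (x / n) := by
      rw [sdT, pow_succ', sd_hyper]
      refine Finset.sum_congr rfl fun n hn => ?_
      rw [sdw_apply, sdZ_apply (by simp at hn; omega)]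
    have hn1 : ∀ n ∈ Finset.Ioc 0 ⌊x⌋₊, (0 : ℝ) < n ∧ 1 ≤ x / n := by
      intro n hn
      have hn := Finset.mem_Ioc.1 hn
      have h0 : (0 : ℝ) < n := by exact_mod_cast hn.1
      refine ⟨h0, (one_le_div h0).2 ?_⟩
      exact (Nat.cast_le.2 hn.2).trans hfl
    have hfac : (0 : ℝ) < κ.factorial := by positivity
    have hfs : (((κ + 1).factorial : ℕ) : ℝ) = (κ + 1) * κ.factorial := by
      rw [Nat.factorial_succ]; push_cast; ring
    have hL : 0 ≤ Real.log x := Real.log_nonneg hx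
    rw [hT, hfs]
    constructor
    · have hlow := sd_lower κ x hx ⌊x⌋₊ hfl
      have : Real.log (x / (⌊x⌋₊ + 1)) ≤ 0 := by
        apply Real.log_nonpos (by positivity)
        rw [div_le_one (by positivity)]
        exact (Nat.lt_floor_add_one x).le
      rw [max_eq_left this, zero_pow (by omega), sub_zero] at hlow
      calc _ = (Real.log x ^ (κ + 1) / (κ + 1)) / κ.factorial := by rw [div_div]
        _ ≤ (∑ n ∈ Finset.Ioc 0 ⌊x⌋₊, 1 / (n : ℝ) * (Real.log (x / n)) ^ κ) / κ.factorial := by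
            gcongr
        _ = ∑ n ∈ Finset.Ioc 0 ⌊x⌋₊, 1 / (n : ℝ) * ((Real.log (x / n)) ^ κ / κ.factorial) := by
            rw [Finset.sum_div]
            exact Finset.sum_congr rfl fun n _ => by ring
        _ ≤ _ := by
            refine Finset.sum_le_sum fun n hn => ?_
            have := hn1 n hn
            exact mul_le_mul_of_nonneg_left (ih _ this.2).1 (by have := this.1; positivity)
    · have hup := sd_upper κ κ x (by positivity) ⌊x⌋₊ h1 hfl
      have hlast : 0 ≤ (κ + Real.log (x / ⌊x⌋₊)) ^ (κ + 1) := by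
        have h0 : (1 : ℝ) ≤ ⌊x⌋₊ := by exact_mod_cast h1
        have := Real.log_nonneg ((one_le_div (by linarith)).2 hfl)
        positivity
      calc _ ≤ ∑ n ∈ Finset.Ioc 0 ⌊x⌋₊, 1 / (n : ℝ) * ((κ + Real.log (x / n)) ^ κ / κ.factorial) := by
            refine Finset.sum_le_sum fun n hn => ?_
            have := hn1 n hn
            exact mul_le_mul_of_nonneg_left (ih _ this.2).2 (by have := this.1; positivity)
        _ = (∑ n ∈ Finset.Ioc 0 ⌊x⌋₊, 1 / (n : ℝ) * (κ + Real.log (x / n)) ^ κ) / κ.factorial := by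
            rw [Finset.sum_div]
            exact Finset.sum_congr rfl fun n _ => by ring
        _ ≤ ((((κ + 1 : ℕ) : ℝ) + Real.log x) ^ (κ + 1) / (κ + 1)) / κ.factorial := by
            refine div_le_div_of_nonneg_right (hup.trans ?_) hfac.le
            have hd := (sd_pow_diff κ (a := κ + Real.log x) (b := ((κ + 1 : ℕ) : ℝ) + Real.log x)
              (by positivity) (by push_cast; linarith)).1
            have hk : (0 : ℝ) < κ + 1 := by positivity
            have e : ((κ + 1 : ℕ) : ℝ) + Real.log x - (κ + Real.log x) = 1 := by push_cast; ring
            rw [e, mul_one] at hd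
            rw [le_div_iff₀ hk, add_mul, div_mul_cancel₀ _ hk.ne']
            linarith
        _ = _ := by rw [div_div]

lemma sdT_zero_of_lt (κ : ℕ) {x : ℝ} (hx : x < 1) : sdT κ x = 0 := by
  rw [sdT, Nat.floor_eq_zero.2 hx]; simp

lemma sdT_nonneg (κ : ℕ) (x : ℝ) : 0 ≤ sdT κ x :=
  Finset.sum_nonneg fun _ _ => div_nonneg (sdZ_pow_nonneg _ _) (by positivity)

lemma sdT_ratio (κ : ℕ) (n : ℕ) (hn : n ≠ 0) :
    Tendsto (fun z : ℝ => sdT κ (z / n) / Real.log z ^ κ) atTop (nhds (1 / κ.factorial)) := by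
  have hn1 : (1 : ℝ) ≤ n := by exact_mod_cast Nat.one_le_iff_ne_zero.2 hn
  have hln : 0 ≤ Real.log n := Real.log_nonneg hn1
  have hlim : ∀ c : ℝ, Tendsto (fun z : ℝ => ((c + Real.log z) / Real.log z) ^ κ / κ.factorial)
      atTop (nhds (1 / κ.factorial)) := by
    intro c
    have h1 : Tendsto (fun z : ℝ => c / Real.log z + 1) atTop (nhds (0 + 1)) :=
      (Tendsto.const_div_atTop Real.tendsto_log_atTop c).add_const 1
    have h2 : Tendsto (fun z : ℝ => (c + Real.log z) / Real.log z) atTop (nhds 1) := by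
      rw [zero_add] at h1
      refine h1.congr' ?_
      filter_upwards [eventually_gt_atTop (1 : ℝ)] with z hz
      have := Real.log_pos hz
      field_simp
    simpa using (h2.pow κ).div_const (κ.factorial : ℝ)
  refine tendsto_of_tendsto_of_tendsto_of_le_of_le' (hlim (- Real.log n)) (hlim κ) ?_ ?_
  · filter_upwards [eventually_gt_atTop (1 : ℝ), eventually_ge_atTop (n : ℝ)] with z hz hzn
    have hL := Real.log_pos hz
    have h := (sdT_bounds κ (z / n) ((one_le_div (by linarith)).2 hzn)).1
    rw [Real.log_div (by linarith) (by linarith)] at h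
    rw [div_pow, div_right_comm]
    refine div_le_div_of_nonneg_right (le_trans (le_of_eq ?_) h) (by positivity)
    congr 2; ring
  · filter_upwards [eventually_gt_atTop (1 : ℝ), eventually_ge_atTop (n : ℝ)] with z hz hzn
    have hL := Real.log_pos hz
    have h1 := (one_le_div (by linarith)).2 hzn
    have h := (sdT_bounds κ (z / n) h1).2
    have h0 := Real.log_nonneg h1
    rw [Real.log_div (by linarith) (by linarith)] at h h0
    rw [div_pow, div_right_comm]
    refine div_le_div_of_nonneg_right (h.trans ?_) (by positivity)
    refine div_le_div_of_nonneg_right (pow_le_pow_left₀ ?_ ?_ _) (by positivity)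
    · have : (0:ℝ) ≤ κ := by positivity
      linarith
    · linarith

lemma sdT_dom (κ : ℕ) (n : ℕ) (hn : n ≠ 0) (z : ℝ) (hz : Real.exp 1 ≤ z) :
    |sdT κ (z / n) / Real.log z ^ κ| ≤ (κ + 1) ^ κ / κ.factorial := by
  have hn1 : (1 : ℝ) ≤ n := by exact_mod_cast Nat.one_le_iff_ne_zero.2 hn
  have hln : 0 ≤ Real.log n := Real.log_nonneg hn1
  have hz0 : 0 < z := (Real.exp_pos 1).trans_le hz
  have hL : 1 ≤ Real.log z := (Real.le_log_iff_exp_le hz0).2 hz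
  rw [abs_of_nonneg (div_nonneg (sdT_nonneg _ _) (by positivity))]
  rcases lt_or_ge (z / n) 1 with h1 | h1
  · rw [sdT_zero_of_lt _ h1, zero_div]; positivity
  · have h := (sdT_bounds κ (z / n) h1).2
    have h0 := Real.log_nonneg h1
    rw [Real.log_div (by linarith) (by linarith)] at h h0
    rw [div_le_iff₀ (by positivity)]
    refine h.trans ?_
    rw [div_mul_eq_mul_div, ← mul_pow]
    have hk : (0:ℝ) ≤ κ := by positivity
    refine div_le_div_of_nonneg_right (pow_le_pow_left₀ (by linarith) ?_ _) (by positivity)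
    nlinarith

lemma sd_main (k : ℕ) (κ : ℕ) (hκ : 2 * κ = k * (k + 1)) :
    ∃ C : ℝ, 0 < C ∧ Tendsto (fun z : ℝ =>
      (∑ m ∈ Finset.Ioc 0 ⌊z⌋₊, sdw (sdf k) m) / Real.log z ^ κ) atTop (nhds C) := by
  have hs := sdw_summable k κ hκ
  have hlim : Tendsto (fun z : ℝ => ∑' n, sdw (sdh k κ) n * (sdT κ (z / n) / Real.log z ^ κ)) atTop
      (nhds (∑' n, sdw (sdh k κ) n * (1 / κ.factorial))) := by
    refine tendsto_tsum_of_dominated_convergence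
      (bound := fun n => ‖sdw (sdh k κ) n‖ * ((κ + 1) ^ κ / κ.factorial))
      (hs.mul_right _) ?_ ?_
    · intro n
      rcases eq_or_ne n 0 with rfl | hn
      · simp
      · exact (sdT_ratio κ n hn).const_mul _
    · filter_upwards [eventually_ge_atTop (Real.exp 1)] with z hz n
      rcases eq_or_ne n 0 with rfl | hn
      · simp
      · rw [norm_mul]
        exact mul_le_mul_of_nonneg_left (sdT_dom κ n hn z hz) (norm_nonneg _)
  have heq : ∀ᶠ z : ℝ in atTop, ∑' n, sdw (sdh k κ) n * (sdT κ (z / n) / Real.log z ^ κ) =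
      (∑ m ∈ Finset.Ioc 0 ⌊z⌋₊, sdw (sdf k) m) / Real.log z ^ κ := by
    filter_upwards [eventually_ge_atTop (1 : ℝ)] with z hz
    rw [← sdh_mul k κ, sd_hyper, Finset.sum_div, tsum_eq_sum (s := Finset.Ioc 0 ⌊z⌋₊)]
    · exact Finset.sum_congr rfl fun n _ => by ring
    · intro n hn
      rcases eq_or_ne n 0 with rfl | hn0
      · simp
      · have h1 : ⌊z⌋₊ < n := by
          by_contra h
          exact hn (Finset.mem_Ioc.2 ⟨Nat.pos_of_ne_zero hn0, not_lt.1 h⟩)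
        have h2 : z < n := (Nat.floor_lt (by linarith)).1 h1
        rw [sdT_zero_of_lt]
        · simp
        · exact (div_lt_one (by linarith)).2 h2
  have hlim2 := hlim.congr' heq
  refine ⟨_, lt_of_le_of_ne ?_ (Ne.symm ?_), hlim2⟩
  · refine ge_of_tendsto hlim2 ?_
    filter_upwards [eventually_ge_atTop (1 : ℝ)] with z hz
    have := Real.log_nonneg hz
    exact div_nonneg (Finset.sum_nonneg fun m _ => div_nonneg (sdf_nonneg _ _) (by positivity))
      (by positivity)
  · rw [tsum_mul_right]
    exact mul_ne_zero (sdw_tsum_ne k κ hκ) (by positivity)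

lemma sd_term (k m : ℕ) (hm : m ≠ 0) :
    (if Odd m then
      (dfold k (m ^ 2) : ℝ) / m * ∏ p ∈ (2 * m).primeFactors, (p : ℝ) / (p + 1)
      else 0) = 2 / 3 * sdw (sdf k) m := by
  rw [sdw_apply, sdf_apply]
  split_ifs with h
  · have hc : Nat.Coprime 2 m := (Nat.coprime_two_left).2 h
    rw [hc.primeFactors_mul, Finset.prod_union hc.disjoint_primeFactors, Nat.prime_two.primeFactors,
      Finset.prod_singleton, sd_dfold_eq k _ (pow_ne_zero 2 hm)]
    push_cast
    ring
  · simp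

/-- Selberg–Delange type asymptotic: since the Dirichlet series of the non-negative
multiplicative summand equals `ζ(s)^{k(k+1)/2}` times a series absolutely convergent
in a half-plane `Re s > 1 - δ` with positive value at `s = 1`, one has
`∑_{m ≤ z, m odd} (d_k(m²)/m) ∏_{p ∣ 2m} p/(p+1) ∼ C(k) (log z)^{k(k+1)/2}`
for a positive constant `C(k)`. -/
theorem selberg_delange_dk_sum (k : ℕ) (hk : 1 ≤ k) :
    ∃ C : ℝ, 0 < C ∧
      Tendsto (fun z : ℝ =>
          (∑ m ∈ Finset.Icc 1 ⌊z⌋₊,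
              if Odd m then
                (dfold k (m ^ 2) : ℝ) / m * ∏ p ∈ (2 * m).primeFactors, (p : ℝ) / (p + 1)
              else 0) /
            Real.log z ^ (k * (k + 1) / 2)) atTop (nhds C) := by
  obtain ⟨C, hC, h⟩ := sd_main k (k * (k + 1) / 2)
    (Nat.mul_div_cancel' (Nat.even_mul_succ_self k).two_dvd)
  refine ⟨2 / 3 * C, by positivity, (h.const_mul (2 / 3)).congr fun z => ?_⟩
  rw [← mul_div_assoc, Finset.mul_sum]
  congr 1
  refine Finset.sum_congr rfl fun m hm => ?_
  rw [sd_term k m]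
  have := (Finset.mem_Ioc.1 hm).1
  omega
end
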